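/- arXiv:2001.00303 — 2 statements merged into one kernel-verified Lean document; each statement's English description precedes it below -/
import Mathlib

section
/- There is a universal constant c ≥ 1 such that: for every integer Δ ≥ 3, every δ ∈ (0,1), every λ > 0 that is up-to-Δ unique with gap δ, and every finite tree T of maximum degree at most Δ rooted at a vertex r, the total R-pseudoinfluence on the root satisfies ∑_{v ∈ T, v ≠ r} ℛ_r^v ≤ exp(c/δ). -/
open scoped Classical
open Finset

noncomputable section

namespace PaperStmt

variable {V : Type*} [Fintype V]

/-- The set of vertices at distance exactly `ℓ` from the root `r`. -/
def levelSet (G : SimpleGraph V) (r : V) (ℓ : ℕ) : Finset V :=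
  Finset.univ.filter fun v => G.dist r v = ℓ

/-- `S` is an independent set of `G`. -/
def IsIndepSet (G : SimpleGraph V) (S : Finset V) : Prop :=
  ∀ i ∈ S, ∀ j ∈ S, ¬ G.Adj i j

/-- Weight of `S` in the level-`ℓ` pinned hardcore measure on the truncation
`T^{≤ℓ}`: the vertices in `P` (a subset of level `ℓ`) have their marginals pinned
by `p`, vertices strictly inside the ball contribute a factor `λ`. -/
def pinWeight (G : SimpleGraph V) (r : V) (lam : ℝ) (ℓ : ℕ) (P : Finset V)
    (p : V → ℝ) (S : Finset V) : ℝ :=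
  if IsIndepSet G S ∧ ∀ v ∈ S, G.dist r v ≤ ℓ then
    lam ^ (S.filter fun v => G.dist r v < ℓ).card
      * (∏ u ∈ P ∩ S, p u) * (∏ u ∈ P \ S, (1 - p u))
  else 0

/-- Probability that `x ∈ S` under the distribution proportional to the weight `w`. -/
def prMem (w : Finset V → ℝ) (x : V) : ℝ :=
  (∑ S : Finset V, if x ∈ S then w S else 0) / (∑ S : Finset V, w S)

/-- The ratio `R = Pr[x ∈ S] / (1 - Pr[x ∈ S])` for the distribution proportional
to the weight `w`. -/
def ratio (w : Finset V → ℝ) (x : V) : ℝ := prMem w x / (1 - prMem w x)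

/-- Weight realizing `ν_p^{v,in}`: the level-`ℓ(v)` pinned measure with `v`
conditioned to be in `S` and the other level-`ℓ(v)` vertices pinned by `p`. -/
def wIn (G : SimpleGraph V) (r : V) (lam : ℝ) (v : V) (p : V → ℝ) :
    Finset V → ℝ :=
  fun S => if v ∈ S then
    pinWeight G r lam (G.dist r v) ((levelSet G r (G.dist r v)).erase v) p S else 0

/-- Weight realizing `ν_p^{v,out}`. -/
def wOut (G : SimpleGraph V) (r : V) (lam : ℝ) (v : V) (p : V → ℝ) :
    Finset V → ℝ :=
  fun S => if v ∉ S then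
    pinWeight G r lam (G.dist r v) ((levelSet G r (G.dist r v)).erase v) p S else 0

/-- The `R`-pseudoinfluence `ℛ_r^v` of `v` on the root `r`. -/
def Rpseudo (G : SimpleGraph V) (r : V) (lam : ℝ) (v : V) : ℝ :=
  sSup {x : ℝ | ∃ p : V → ℝ, (∀ u, 0 ≤ p u ∧ p u ≤ 1) ∧
    x = |ratio (wIn G r lam v p) r - ratio (wOut G r lam v p) r|}

/-- The pseudoinfluence `ℐ_r^v` of `v` on the root `r` (probability version). -/
def Ipseudo (G : SimpleGraph V) (r : V) (lam : ℝ) (v : V) : ℝ :=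
  sSup {x : ℝ | ∃ p : V → ℝ, (∀ u, 0 ≤ p u ∧ p u ≤ 1) ∧
    x = |prMem (wIn G r lam v p) r - prMem (wOut G r lam v p) r|}

/-- The vertex set of the subtree `T_u`: vertices `w` such that `u` lies on the
path from `r` to `w`. -/
def subtreeSet (G : SimpleGraph V) (r u : V) : Set V :=
  {w | G.dist r w = G.dist r u + G.dist u w}

/-- The subtree `T_u` as an induced subgraph. -/
def subtree (G : SimpleGraph V) (r u : V) : SimpleGraph (subtreeSet G r u) :=
  G.induce (subtreeSet G r u)

/-- `λ` is up-to-`Δ` unique with gap `δ`. -/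
def UpToUnique (Δ : ℕ) (lam δ : ℝ) : Prop :=
  ∀ d : ℕ, 1 ≤ d → d ≤ Δ - 1 → ∀ R : ℝ, 0 < R → lam = R * (1 + R) ^ d →
    (d : ℝ) * R / (1 + R) ≤ 1 - δ

/-!
The ratio `R_r` is computed by the tree recursion `R_u = λ ∏ (1 + R_w)⁻¹` over the children `w` of
`u`. In the coordinate `arsinh √R` each step of the recursion contracts the supremum norm by the
factor `√(1 - δ)`: AM–GM reduces the claim to equal children, and Bernoulli's inequality compares
these with the fixed point of `x ↦ λ / (1 + x) ^ d`. Hence the odds forget the boundary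
geometrically fast in the distance from it, and each factor in the derivative of the recursion
varies with the boundary by a geometrically small relative amount. Since these relative errors sum
to `O(1/δ)`, the pseudoinfluence of `v` is at most `exp (O(1/δ))` times its influence under one
fixed boundary condition. That influence, summed over a level with the weights `√(R (1 + R))`,
decays by the factor `√(1 - δ)` per level, again by the contraction inequality, so the total is
`O(1/δ)`. The constants are universal because uniqueness forces `Δ λ ≤ 24`.
-/

section UniquenessGap

/-- The map `x ↦ lam / (1 + x) ^ d` has a positive fixed point at which its derivative is at most
`1 - δ` in absolute value: the uniqueness condition for a single branching number `d`. -/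
def HasGap (d : ℕ) (lam δ : ℝ) : Prop :=
  ∃ R : ℝ, 0 < R ∧ lam = R * (1 + R) ^ d ∧ d * R / (1 + R) ≤ 1 - δ

variable {d : ℕ} {lam δ : ℝ}

theorem HasGap.pos (h : HasGap d lam δ) : 0 < lam := by
  obtain ⟨R, hR, rfl, -⟩ := h
  positivity

theorem exists_pos_fixedPoint (hlam : 0 < lam) (d : ℕ) : ∃ R, 0 < R ∧ lam = R * (1 + R) ^ d := by
  have hcont : ContinuousOn (fun R : ℝ => R * (1 + R) ^ d) (Set.Icc 0 lam) := by fun_prop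
  have hmem : lam ∈ Set.Icc ((0 : ℝ) * (1 + 0) ^ d) (lam * (1 + lam) ^ d) :=
    ⟨by simpa using hlam.le, le_mul_of_one_le_right hlam.le (one_le_pow₀ (by linarith))⟩
  obtain ⟨R, hR, hfix⟩ := intermediate_value_Icc hlam.le hcont hmem
  refine ⟨R, hR.1.lt_of_ne ?_, hfix.symm⟩
  rintro rfl
  simp [hlam.ne] at hfix

theorem UpToUnique.hasGap {Δ : ℕ} (h : UpToUnique Δ lam δ) (hlam : 0 < lam) (hδ : δ ≤ 1)
    (hd : d ≤ Δ - 1) : HasGap d lam δ := by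
  obtain ⟨R, hR, hfix⟩ := exists_pos_fixedPoint hlam d
  refine ⟨R, hR, hfix, ?_⟩
  rcases d.eq_zero_or_pos with rfl | hpos
  · simpa using hδ
  · exact h d hpos hd R hR hfix

theorem HasGap.succ_mul_le (h : HasGap d lam δ) (hδ : 0 ≤ δ) (hd : 2 ≤ d) :
    (d + 1 : ℕ) * lam ≤ 24 := by
  obtain ⟨R, hR, rfl, hgap⟩ := h
  have hd' : (2 : ℝ) ≤ d := by exact_mod_cast hd
  have hdR : d * R ≤ 1 + R := (div_le_one (by linarith)).1 (by linarith)
  have hR1 : R ≤ 1 := by nlinarith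
  have hpow : (1 + R) ^ d ≤ 8 := calc
    (1 + R) ^ d ≤ Real.exp R ^ d := by gcongr; linarith [Real.add_one_le_exp R]
    _ = Real.exp (d * R) := by rw [← Real.exp_nat_mul]
    _ ≤ Real.exp 2 := Real.exp_le_exp.2 (by linarith)
    _ = Real.exp 1 ^ 2 := by rw [← Real.exp_nat_mul]; norm_num
    _ ≤ 2.72 ^ 2 := by gcongr; exact Real.exp_one_lt_d9.le.trans (by norm_num)
    _ ≤ 8 := by norm_num
  calc ((d + 1 : ℕ) : ℝ) * (R * (1 + R) ^ d) = (d * R + R) * (1 + R) ^ d := by push_cast; ring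
    _ ≤ 3 * 8 := by gcongr; linarith
    _ = 24 := by norm_num

end UniquenessGap

section Decay

theorem prod_le_avg_pow {ι : Type*} {s : Finset ι} {f : ι → ℝ} (hf : ∀ i ∈ s, 0 ≤ f i) :
    ∏ i ∈ s, f i ≤ ((∑ i ∈ s, f i) / #s) ^ #s := by
  rcases s.eq_empty_or_nonempty with rfl | hs
  · simp
  have hmean := Real.geom_mean_le_arith_mean s (fun _ => 1) f (fun _ _ => zero_le_one)
    (by simpa using hs) hf
  simp only [Real.rpow_one, one_mul, sum_const, nsmul_eq_mul, mul_one] at hmean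
  have hprod := prod_nonneg hf
  rw [← Real.rpow_inv_natCast_pow hprod hs.card_ne_zero]
  gcongr

theorem div_one_add_le_div_one_add {x y : ℝ} (hx : 0 ≤ x) (hxy : x ≤ y) :
    x / (1 + x) ≤ y / (1 + y) := by
  rw [div_le_div_iff₀ (by linarith) (by linarith)]
  linarith

theorem mul_mul_div_one_add_le_of_fixedPoint {n : ℕ} {R a F : ℝ} (hR : 0 < R)
    (hn : n * R ≤ 1 + R) (ha : a < 1) (hF : F = R * ((1 + R) * (1 - a)) ^ n) :
    n * a * (F / (1 + F)) ≤ R / (1 + R) := by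
  set y := (1 + R) * (1 - a)
  have hy : 0 < y := mul_pos (by linarith) (by linarith)
  have hbernoulli : 1 + n * (y⁻¹ - 1) ≤ y⁻¹ ^ n := by
    simpa using one_add_mul_le_pow (a := y⁻¹ - 1) (by linarith [inv_pos.2 hy]) n
  have hamgm : 2 ≤ y + y⁻¹ := by
    have : y + y⁻¹ - 2 = (y - 1) ^ 2 / y := by field_simp; ring
    linarith [show 0 ≤ (y - 1) ^ 2 / y by positivity]
  have hmain : n * a * (1 + R) ≤ y⁻¹ ^ n + R := calc
    n * a * (1 + R) = n * R + n - n * y := by ring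
    _ ≤ 1 + R + n * (y + y⁻¹ - 1) - n * y := by nlinarith [Nat.cast_nonneg (α := ℝ) n]
    _ = 1 + n * (y⁻¹ - 1) + R := by ring
    _ ≤ y⁻¹ ^ n + R := by gcongr
  have hdiv : F / (1 + F) = R / (y⁻¹ ^ n + R) := by
    rw [hF, inv_pow]
    field_simp
  rw [hdiv, ← mul_div_assoc, div_le_div_iff₀ (by positivity) (by linarith)]
  linarith [mul_le_mul_of_nonneg_right hmain hR.le]

variable {ι : Type*} {s : Finset ι} {lam δ : ℝ} {x : ι → ℝ}

theorem prod_inv_one_add_le_pow (hx : ∀ i ∈ s, 0 ≤ x i) :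
    ∏ i ∈ s, (1 + x i)⁻¹ ≤ (1 - (∑ i ∈ s, x i / (1 + x i)) / #s) ^ #s := by
  rcases s.eq_empty_or_nonempty with rfl | hs
  · simp
  have hinv : ∀ i ∈ s, (1 + x i)⁻¹ = 1 - x i / (1 + x i) := fun i hi => by
    have : 1 + x i ≠ 0 := by linarith [hx i hi]
    field_simp
    ring
  have havg : (∑ i ∈ s, (1 + x i)⁻¹) / #s = 1 - (∑ i ∈ s, x i / (1 + x i)) / #s := by
    rw [sum_congr rfl hinv, sum_sub_distrib, sum_const, nsmul_one, sub_div,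
      div_self (by simpa using hs.ne_empty)]
  rw [← havg]
  exact prod_le_avg_pow fun i hi => inv_nonneg.2 (by linarith [hx i hi])

theorem HasGap.div_one_add_mul_sum_le (h : HasGap #s lam δ) (hδ : 0 ≤ δ)
    (hx : ∀ i ∈ s, 0 ≤ x i) {y : ℝ} (hy : y = lam * ∏ i ∈ s, (1 + x i)⁻¹) :
    y / (1 + y) * (#s * ∑ i ∈ s, x i / (1 + x i)) ≤ 1 - δ := by
  obtain ⟨R, hR, rfl, hgap⟩ := h
  rcases s.eq_empty_or_nonempty with rfl | hs
  · simpa using hgap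
  have hcard : (0 : ℝ) < #s := by exact_mod_cast hs.card_pos
  obtain ⟨a, ha⟩ : ∃ a, a = (∑ i ∈ s, x i / (1 + x i)) / #s := ⟨_, rfl⟩
  have hsum : ∑ i ∈ s, x i / (1 + x i) = #s * a := by rw [ha, mul_div_cancel₀ _ hcard.ne']
  have ha0 : 0 ≤ a := ha ▸ div_nonneg
    (sum_nonneg fun i hi => div_nonneg (hx i hi) (by linarith [hx i hi])) hcard.le
  have ha1 : a < 1 := by
    rw [ha, div_lt_one hcard, ← nsmul_one, ← sum_const]
    refine sum_lt_sum_of_nonempty hs fun i hi => ?_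
    rw [div_lt_one] <;> linarith [hx i hi]
  obtain ⟨F, hF⟩ : ∃ F, F = R * ((1 + R) * (1 - a)) ^ #s := ⟨_, rfl⟩
  have hyF : y ≤ F := by
    rw [hy, hF, mul_pow, ha, ← mul_assoc]
    gcongr
    exact prod_inv_one_add_le_pow hx
  have hy0 : 0 ≤ y := hy ▸ mul_nonneg (by positivity)
    (prod_nonneg fun i hi => inv_nonneg.2 (by linarith [hx i hi]))
  have hfix := mul_mul_div_one_add_le_of_fixedPoint hR
    ((div_le_one (by linarith)).1 (by linarith)) ha1 hF
  calc y / (1 + y) * (#s * ∑ i ∈ s, x i / (1 + x i))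
      = y / (1 + y) * (#s * (#s * a)) := by rw [hsum]
    _ ≤ F / (1 + F) * (#s * (#s * a)) :=
        mul_le_mul_of_nonneg_right (div_one_add_le_div_one_add hy0 hyF)
          (mul_nonneg hcard.le (mul_nonneg hcard.le ha0))
    _ = #s * (#s * a * (F / (1 + F))) := by ring
    _ ≤ #s * (R / (1 + R)) := mul_le_mul_of_nonneg_left hfix hcard.le
    _ ≤ 1 - δ := by rwa [← mul_div_assoc]

theorem HasGap.sqrt_mul_sum_sqrt_le (h : HasGap #s lam δ) (hδ : 0 ≤ δ)
    (hx : ∀ i ∈ s, 0 ≤ x i) {y : ℝ} (hy : y = lam * ∏ i ∈ s, (1 + x i)⁻¹) :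
    √(y / (1 + y)) * ∑ i ∈ s, √(x i / (1 + x i)) ≤ √(1 - δ) := by
  have hy0 : 0 ≤ y := hy ▸ mul_nonneg h.pos.le
    (prod_nonneg fun i hi => inv_nonneg.2 (by linarith [hx i hi]))
  have hcauchy : (∑ i ∈ s, √(x i / (1 + x i))) ^ 2 ≤ #s * ∑ i ∈ s, x i / (1 + x i) := by
    refine sq_sum_le_card_mul_sum_sq.trans_eq (congrArg _ (sum_congr rfl fun i hi => ?_))
    exact Real.sq_sqrt (div_nonneg (hx i hi) (by linarith [hx i hi]))
  apply Real.le_sqrt_of_sq_le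
  rw [mul_pow, Real.sq_sqrt (by positivity)]
  refine le_trans ?_ (h.div_one_add_mul_sum_le hδ hx hy)
  gcongr

end Decay

section Potential

/-- The coordinate on odds in which the tree recursion contracts. Its derivative is
`1 / (2 * √(x * (1 + x)))`. -/
def potential (x : ℝ) : ℝ := Real.arsinh √x

theorem potential_nonneg (x : ℝ) : 0 ≤ potential x := Real.arsinh_nonneg_iff.2 (Real.sqrt_nonneg x)

theorem potential_le_sqrt (x : ℝ) : potential x ≤ √x := by
  rw [potential, ← Real.sinh_le_sinh, Real.sinh_arsinh]
  exact Real.self_le_sinh_iff.2 (Real.sqrt_nonneg x)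

theorem sinh_potential_sq {x : ℝ} (hx : 0 ≤ x) : Real.sinh (potential x) ^ 2 = x := by
  rw [potential, Real.sinh_arsinh, Real.sq_sqrt hx]

theorem cosh_potential {x : ℝ} (hx : 0 ≤ x) : Real.cosh (potential x) = √(1 + x) := by
  rw [potential, Real.cosh_arsinh, Real.sq_sqrt hx]

theorem abs_potential_sub_le {x y m : ℝ} (hx : x ≤ m) (hy : y ≤ m) :
    |potential x - potential y| ≤ √m := by
  have hle : ∀ {z}, z ≤ m → potential z ≤ √m := fun {z} hz =>
    (potential_le_sqrt z).trans (Real.sqrt_le_sqrt hz)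
  exact abs_sub_le_iff.2 ⟨by linarith [hle hx, potential_nonneg y],
    by linarith [hle hy, potential_nonneg x]⟩

theorem abs_log_cosh_sub_log_cosh_le {s t m : ℝ} (hs : s ∈ Set.Icc 0 m) (ht : t ∈ Set.Icc 0 m) :
    |Real.log (Real.cosh s) - Real.log (Real.cosh t)| ≤ Real.sinh m * |s - t| := by
  refine (convex_Icc 0 m).norm_image_sub_le_of_norm_hasDerivWithin_le
    (fun z _ => ((Real.hasDerivAt_cosh z).log (Real.cosh_pos z).ne').hasDerivWithinAt)
    (fun z hz => ?_) ht hs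
  have hsinh : 0 ≤ Real.sinh z := Real.sinh_nonneg_iff.2 hz.1
  rw [Real.norm_eq_abs, abs_of_nonneg (div_nonneg hsinh (Real.cosh_pos z).le)]
  exact (div_le_self hsinh (Real.one_le_cosh z)).trans (Real.sinh_le_sinh.2 hz.2)

theorem one_add_le_one_add_mul_exp {x y m : ℝ} (hx : x ∈ Set.Icc 0 m) (hy : y ∈ Set.Icc 0 m) :
    1 + x ≤ (1 + y) * Real.exp (2 * √m * |potential x - potential y|) := by
  have hmem : ∀ {z}, z ∈ Set.Icc 0 m → potential z ∈ Set.Icc 0 (potential m) := fun {z} hz =>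
    ⟨potential_nonneg z, Real.arsinh_le_arsinh.2 (Real.sqrt_le_sqrt hz.2)⟩
  have hlog : ∀ {z}, 0 ≤ z → Real.log (Real.cosh (potential z)) = Real.log (1 + z) / 2 :=
    fun {z} hz => by rw [cosh_potential hz, Real.log_sqrt (by linarith)]
  have hlip := (le_abs_self _).trans (abs_log_cosh_sub_log_cosh_le (hmem hx) (hmem hy))
  rw [hlog hx.1, hlog hy.1, potential, Real.sinh_arsinh] at hlip
  have hx1 : 0 < 1 + x := by linarith [hx.1]
  have hy1 : 0 < 1 + y := by linarith [hy.1]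
  rw [← Real.log_le_log_iff hx1 (by positivity), Real.log_mul hy1.ne' (Real.exp_pos _).ne',
    Real.log_exp]
  linarith

end Potential

section Contraction

variable {ι : Type*} {s : Finset ι} {lam δ : ℝ}

/-- The square root of the odds of a vertex with activity `lam` as a function of the potentials
`t i` of its children, whose odds are `sinh (t i) ^ 2`. -/
def sqrtOdds (lam : ℝ) (s : Finset ι) (t : ι → ℝ) : ℝ := √lam * ∏ i ∈ s, (Real.cosh (t i))⁻¹

theorem sqrtOdds_nonneg (lam : ℝ) (s : Finset ι) (t : ι → ℝ) : 0 ≤ sqrtOdds lam s t :=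
  mul_nonneg (Real.sqrt_nonneg _) (prod_nonneg fun i _ => inv_nonneg.2 (Real.cosh_pos (t i)).le)

theorem sqrtOdds_sq (hlam : 0 ≤ lam) (t : ι → ℝ) :
    sqrtOdds lam s t ^ 2 = lam * ∏ i ∈ s, (1 + Real.sinh (t i) ^ 2)⁻¹ := by
  simp only [sqrtOdds, mul_pow, Real.sq_sqrt hlam, ← prod_pow, inv_pow, Real.cosh_sq']

theorem tanh_nonneg {t : ℝ} (ht : 0 ≤ t) : 0 ≤ Real.tanh t := by
  rw [Real.tanh_eq_sinh_div_cosh]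
  exact div_nonneg (Real.sinh_nonneg_iff.2 ht) (Real.cosh_pos t).le

theorem hasDerivAt_sqrtOdds {τ : ℝ → ι → ℝ} {τ' : ι → ℝ} {θ : ℝ}
    (hτ : ∀ i ∈ s, HasDerivAt (fun θ => τ θ i) (τ' i) θ) :
    HasDerivAt (fun θ => sqrtOdds lam s (τ θ))
      (-(sqrtOdds lam s (τ θ) * ∑ i ∈ s, Real.tanh (τ θ i) * τ' i)) θ := by
  have hexp : ∀ θ, sqrtOdds lam s (τ θ) =
      √lam * Real.exp (-∑ i ∈ s, Real.log (Real.cosh (τ θ i))) := fun θ => by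
    simp only [sqrtOdds, ← sum_neg_distrib, Real.exp_sum, Real.exp_neg,
      Real.exp_log (Real.cosh_pos _)]
  have hlog : ∀ i ∈ s, HasDerivAt (fun θ => Real.log (Real.cosh (τ θ i)))
      (Real.tanh (τ θ i) * τ' i) θ := fun i hi => by
    rw [Real.tanh_eq_sinh_div_cosh, div_mul_eq_mul_div]
    exact (hτ i hi).cosh.log (Real.cosh_pos _).ne'
  rw [funext hexp, hexp θ, mul_assoc, ← mul_neg, ← mul_neg]
  exact (HasDerivAt.fun_sum hlog).fun_neg.exp.const_mul √lam

theorem HasGap.sqrtOdds_mul_sum_tanh_le (h : HasGap #s lam δ) (hδ : 0 ≤ δ) {t : ι → ℝ}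
    (ht : ∀ i ∈ s, 0 ≤ t i) :
    (√(1 + sqrtOdds lam s t ^ 2))⁻¹ * (sqrtOdds lam s t * ∑ i ∈ s, Real.tanh (t i)) ≤ √(1 - δ) := by
  have hdecay := h.sqrt_mul_sum_sqrt_le hδ (fun i _ => sq_nonneg (Real.sinh (t i)))
    (sqrtOdds_sq h.pos.le t)
  have htanh : ∀ i ∈ s, √(Real.sinh (t i) ^ 2 / (1 + Real.sinh (t i) ^ 2)) = Real.tanh (t i) :=
    fun i hi => by
      rw [← Real.cosh_sq', ← div_pow, ← Real.tanh_eq_sinh_div_cosh,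
        Real.sqrt_sq (tanh_nonneg (ht i hi))]
  rwa [sum_congr rfl htanh, Real.sqrt_div (sq_nonneg _), Real.sqrt_sq (sqrtOdds_nonneg _ _ _),
    div_eq_inv_mul, mul_assoc] at hdecay

theorem HasGap.abs_arsinh_sqrtOdds_sub_le (h : HasGap #s lam δ) (hδ : 0 ≤ δ) {t t' : ι → ℝ} {m : ℝ}
    (ht : ∀ i ∈ s, 0 ≤ t i) (ht' : ∀ i ∈ s, 0 ≤ t' i) (hm : 0 ≤ m)
    (htt' : ∀ i ∈ s, |t i - t' i| ≤ m) :
    |Real.arsinh (sqrtOdds lam s t) - Real.arsinh (sqrtOdds lam s t')| ≤ √(1 - δ) * m := by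
  set τ : ℝ → ι → ℝ := fun θ i => t' i + θ * (t i - t' i)
  have hτ : ∀ θ, ∀ i ∈ s, HasDerivAt (fun θ => τ θ i) (t i - t' i) θ := fun θ i _ => by
    rw [← one_mul (t i - t' i)]
    exact ((hasDerivAt_id θ).mul_const (t i - t' i)).const_add (t' i)
  have hτ0 : ∀ θ ∈ Set.Icc (0 : ℝ) 1, ∀ i ∈ s, 0 ≤ τ θ i := fun θ hθ i hi => by
    nlinarith [hθ.1, hθ.2, ht i hi, ht' i hi]
  have hsum : ∀ θ ∈ Set.Icc (0 : ℝ) 1, |∑ i ∈ s, Real.tanh (τ θ i) * (t i - t' i)| ≤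
      (∑ i ∈ s, Real.tanh (τ θ i)) * m := fun θ hθ => by
    rw [sum_mul]
    refine (abs_sum_le_sum_abs _ _).trans (sum_le_sum fun i hi => ?_)
    have htanh := tanh_nonneg (hτ0 θ hθ i hi)
    rw [abs_mul, abs_of_nonneg htanh]
    exact mul_le_mul_of_nonneg_left (htt' i hi) htanh
  have hmvt := (convex_Icc (0 : ℝ) 1).norm_image_sub_le_of_norm_hasDerivWithin_le
    (C := √(1 - δ) * m)
    (fun θ _ => (hasDerivAt_sqrtOdds (lam := lam) (hτ θ)).arsinh.hasDerivWithinAt)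
    (fun θ hθ => ?_) (Set.left_mem_Icc.2 zero_le_one) (Set.right_mem_Icc.2 zero_le_one)
  · simpa [τ] using hmvt
  have hY := sqrtOdds_nonneg lam s (τ θ)
  rw [Real.norm_eq_abs, smul_eq_mul, abs_mul, abs_neg, abs_mul, abs_of_nonneg hY, abs_inv,
    abs_of_nonneg (Real.sqrt_nonneg _)]
  calc _ ≤ (√(1 + sqrtOdds lam s (τ θ) ^ 2))⁻¹ *
        (sqrtOdds lam s (τ θ) * ((∑ i ∈ s, Real.tanh (τ θ i)) * m)) := by
        gcongr
        exact hsum θ hθ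
    _ = (√(1 + sqrtOdds lam s (τ θ) ^ 2))⁻¹ *
        (sqrtOdds lam s (τ θ) * ∑ i ∈ s, Real.tanh (τ θ i)) * m := by ring
    _ ≤ √(1 - δ) * m := by
        gcongr
        exact h.sqrtOdds_mul_sum_tanh_le hδ (hτ0 θ hθ)

theorem HasGap.abs_potential_sub_le (h : HasGap #s lam δ) (hδ : 0 ≤ δ) {x x' : ι → ℝ} {m : ℝ}
    (hx : ∀ i ∈ s, 0 ≤ x i) (hx' : ∀ i ∈ s, 0 ≤ x' i) (hm : 0 ≤ m)
    (hxx' : ∀ i ∈ s, |potential (x i) - potential (x' i)| ≤ m) :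
    |potential (lam * ∏ i ∈ s, (1 + x i)⁻¹) - potential (lam * ∏ i ∈ s, (1 + x' i)⁻¹)| ≤
      √(1 - δ) * m := by
  have hpot : ∀ {z : ι → ℝ}, (∀ i ∈ s, 0 ≤ z i) → potential (lam * ∏ i ∈ s, (1 + z i)⁻¹) =
      Real.arsinh (sqrtOdds lam s fun i => potential (z i)) := fun {z} hz => by
    rw [potential, ← Real.sqrt_sq (sqrtOdds_nonneg lam s fun i => potential (z i)),
      sqrtOdds_sq h.pos.le]
    exact congrArg (fun a => Real.arsinh √(lam * a))
      (prod_congr rfl fun i hi => by rw [sinh_potential_sq (hz i hi)])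
  rw [hpot hx, hpot hx']
  exact h.abs_arsinh_sqrtOdds_sub_le hδ (fun i _ => potential_nonneg _)
    (fun i _ => potential_nonneg _) hm hxx'

end Contraction

section Recursion

/-- The odds of `u` in the tree recursion with activity `lam` and child sets `ch`, when the vertices
`k + 1` levels below `u` are occupied with probabilities `p`. -/
def levelOdds {α : Type*} (ch : α → Finset α) (lam : ℝ) (p : α → ℝ) : ℕ → α → ℝ
  | 0, u => lam * ∏ w ∈ ch u, (1 - p w)
  | k + 1, u => lam * ∏ w ∈ ch u, (1 + levelOdds ch lam p k w)⁻¹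

variable {α : Type*} {ch : α → Finset α} {lam δ : ℝ} {p p' : α → ℝ}

theorem levelOdds_mem_Icc (hlam : 0 ≤ lam) (hp : ∀ u, p u ∈ Set.Icc 0 1) (k : ℕ) (u : α) :
    levelOdds ch lam p k u ∈ Set.Icc 0 lam := by
  suffices h : ∃ f : α → ℝ, (∀ w, f w ∈ Set.Icc 0 1) ∧
      levelOdds ch lam p k u = lam * ∏ w ∈ ch u, f w by
    obtain ⟨f, hf, heq⟩ := h
    exact heq ▸ ⟨mul_nonneg hlam (prod_nonneg fun w _ => (hf w).1),
      mul_le_of_le_one_right hlam (prod_le_one (fun w _ => (hf w).1) fun w _ => (hf w).2)⟩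
  induction k generalizing u with
  | zero => exact ⟨_, fun w => ⟨sub_nonneg.2 (hp w).2, sub_le_self 1 (hp w).1⟩, rfl⟩
  | succ k ih =>
    have hnonneg : ∀ w, 0 ≤ levelOdds ch lam p k w := fun w => by
      obtain ⟨f, hf, heq⟩ := ih w
      exact heq ▸ mul_nonneg hlam (prod_nonneg fun w _ => (hf w).1)
    exact ⟨_, fun w => ⟨inv_nonneg.2 (by linarith [hnonneg w]),
      inv_le_one_of_one_le₀ (by linarith [hnonneg w])⟩, rfl⟩

theorem levelOdds_nonneg (hlam : 0 ≤ lam) (hp : ∀ u, p u ∈ Set.Icc 0 1) (k : ℕ) (u : α) :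
    0 ≤ levelOdds ch lam p k u :=
  (levelOdds_mem_Icc hlam hp k u).1

theorem abs_potential_levelOdds_sub_le (hδ : 0 ≤ δ) (hlam : 0 ≤ lam)
    (hgap : ∀ u, ∀ w ∈ ch u, HasGap #(ch w) lam δ) (hp : ∀ u, p u ∈ Set.Icc 0 1)
    (hp' : ∀ u, p' u ∈ Set.Icc 0 1) (k : ℕ) {u w : α} (hw : w ∈ ch u) :
    |potential (levelOdds ch lam p k w) - potential (levelOdds ch lam p' k w)| ≤
      √lam * √(1 - δ) ^ k := by
  induction k generalizing u w with
  | zero =>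
    rw [pow_zero, mul_one]
    exact abs_potential_sub_le (levelOdds_mem_Icc hlam hp 0 w).2 (levelOdds_mem_Icc hlam hp' 0 w).2
  | succ k ih =>
    rw [pow_succ', mul_left_comm]
    exact (hgap u w hw).abs_potential_sub_le hδ (fun x _ => levelOdds_nonneg hlam hp k x)
      (fun x _ => levelOdds_nonneg hlam hp' k x) (by positivity) fun x hx => ih hx

theorem one_add_levelOdds_le_mul_exp (hδ : 0 ≤ δ) (hlam : 0 ≤ lam)
    (hgap : ∀ u, ∀ w ∈ ch u, HasGap #(ch w) lam δ) (hp : ∀ u, p u ∈ Set.Icc 0 1)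
    (hp' : ∀ u, p' u ∈ Set.Icc 0 1) (k : ℕ) {u w : α} (hw : w ∈ ch u) :
    1 + levelOdds ch lam p k w ≤
      (1 + levelOdds ch lam p' k w) * Real.exp (2 * lam * √(1 - δ) ^ k) := by
  refine (one_add_le_one_add_mul_exp (levelOdds_mem_Icc (ch := ch) hlam hp k w)
    (levelOdds_mem_Icc (ch := ch) hlam hp' k w)).trans ?_
  have hpot := abs_potential_levelOdds_sub_le hδ hlam hgap hp hp' k hw
  have hpos := levelOdds_nonneg (ch := ch) hlam hp' k w
  have hexponent : 2 * √lam *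
      |potential (levelOdds ch lam p k w) - potential (levelOdds ch lam p' k w)| ≤
        2 * lam * √(1 - δ) ^ k := calc
    _ ≤ 2 * √lam * (√lam * √(1 - δ) ^ k) := by gcongr
    _ = 2 * lam * √(1 - δ) ^ k := by rw [← mul_assoc, mul_assoc 2, Real.mul_self_sqrt hlam]
  exact mul_le_mul_of_nonneg_left (Real.exp_le_exp.2 hexponent) (by linarith)

theorem levelOdds_succ_le_mul_exp (hδ : 0 ≤ δ) (hlam : 0 ≤ lam)
    (hgap : ∀ u, ∀ w ∈ ch u, HasGap #(ch w) lam δ) (hp : ∀ u, p u ∈ Set.Icc 0 1)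
    (hp' : ∀ u, p' u ∈ Set.Icc 0 1) (k : ℕ) (u : α) :
    levelOdds ch lam p (k + 1) u ≤
      levelOdds ch lam p' (k + 1) u * Real.exp (2 * (#(ch u) * lam) * √(1 - δ) ^ k) := by
  have hexp : Real.exp (2 * (#(ch u) * lam) * √(1 - δ) ^ k) =
      ∏ _w ∈ ch u, Real.exp (2 * lam * √(1 - δ) ^ k) := by
    rw [prod_const, ← Real.exp_nat_mul]
    ring_nf
  rw [levelOdds, levelOdds, hexp, mul_assoc, ← prod_mul_distrib]
  gcongr with w hw
  · exact fun w _ => inv_nonneg.2 (by linarith [levelOdds_nonneg (ch := ch) hlam hp k w])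
  have hcomp := one_add_levelOdds_le_mul_exp hδ hlam hgap hp' hp k hw
  have hpos := levelOdds_nonneg (ch := ch) hlam hp k w
  have hpos' := levelOdds_nonneg (ch := ch) hlam hp' k w
  rw [inv_mul_eq_div, le_div_iff₀ (by linarith), inv_mul_le_iff₀ (by linarith)]
  exact hcomp

theorem subsingleton_setOf_exists_mem (hch : ∀ ⦃u u' w⦄, w ∈ ch u → w ∈ ch u' → u = u')
    {D : Set α} (hD : D.Subsingleton) : {u | ∃ w ∈ ch u, w ∈ D}.Subsingleton := by
  rintro u ⟨w, hw, hwD⟩ u' ⟨w', hw', hwD'⟩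
  exact hch hw (hD hwD hwD' ▸ hw')

theorem subsingleton_levelOdds_ne (hch : ∀ ⦃u u' w⦄, w ∈ ch u → w ∈ ch u' → u = u')
    (hpp' : {u | p u ≠ p' u}.Subsingleton) (k : ℕ) :
    {u | levelOdds ch lam p k u ≠ levelOdds ch lam p' k u}.Subsingleton := by
  induction k with
  | zero =>
    refine (subsingleton_setOf_exists_mem hch hpp').anti fun u hu => ?_
    contrapose! hu
    simp only [Set.mem_ofPred_eq, not_exists, not_and, not_not] at hu ⊢
    simp only [levelOdds]
    rw [prod_congr rfl fun w hw => by rw [hu w hw]]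
  | succ k ih =>
    refine (subsingleton_setOf_exists_mem hch ih).anti fun u hu => ?_
    contrapose! hu
    simp only [Set.mem_ofPred_eq, not_exists, not_and, not_not] at hu ⊢
    simp only [levelOdds]
    rw [prod_congr rfl fun w hw => by rw [hu w hw]]

end Recursion

section Influence

theorem abs_prod_inv_sub_prod_inv {ι : Type*} {s : Finset ι} {x y : ι → ℝ}
    (hx : ∀ i ∈ s, 0 < x i) (hy : ∀ i ∈ s, 0 < y i) (hxy : {i | x i ≠ y i}.Subsingleton) :
    |∏ i ∈ s, (x i)⁻¹ - ∏ i ∈ s, (y i)⁻¹| = (∏ i ∈ s, (x i)⁻¹) * ∑ i ∈ s, |x i - y i| / y i := by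
  by_cases h : ∃ i ∈ s, x i ≠ y i
  · obtain ⟨i, hi, hne⟩ := h
    have heq : ∀ j ∈ s, j ≠ i → x j = y j := fun j _ hji => not_not.1 fun hj => hji (hxy hj hne)
    have hrest : ∏ j ∈ s.erase i, (y j)⁻¹ = ∏ j ∈ s.erase i, (x j)⁻¹ :=
      prod_congr rfl fun j hj => by rw [heq j (mem_of_mem_erase hj) (ne_of_mem_erase hj)]
    have hpos : 0 < ∏ j ∈ s.erase i, (x j)⁻¹ :=
      prod_pos fun j hj => inv_pos.2 (hx j (mem_of_mem_erase hj))
    have hxi := hx i hi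
    have hyi := hy i hi
    rw [sum_eq_single_of_mem i hi fun j hj hji => by simp [heq j hj hji],
      ← mul_prod_erase s _ hi, ← mul_prod_erase s _ hi, hrest, ← sub_mul, abs_mul,
      abs_of_pos hpos, inv_sub_inv hxi.ne' hyi.ne', abs_div, abs_of_pos (mul_pos hxi hyi),
      abs_sub_comm]
    field_simp
  · push Not at h
    rw [prod_congr rfl fun i hi => by rw [h i hi], sub_self, abs_zero,
      sum_eq_zero fun i hi => by simp [h i hi], mul_zero]

/-- The recursion obtained by differentiating `levelOdds` at `p` through the levels above the
boundary. Up to a constant factor it bounds the effect on the odds of `u` of changing the boundary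
value at a vertex `v` that lies `k + 1` levels below `u`, whatever the other boundary values. -/
def influence {α : Type*} (ch : α → Finset α) (lam : ℝ) (p : α → ℝ) : ℕ → α → α → ℝ
  | 0, u, v => if v ∈ ch u then lam else 0
  | k + 1, u, v => levelOdds ch lam p (k + 1) u *
      ∑ w ∈ ch u, influence ch lam p k w v / (1 + levelOdds ch lam p k w)

variable {α : Type*} {ch : α → Finset α} {lam δ K : ℝ} {p p' p₀ : α → ℝ} {u v : α}

theorem abs_levelOdds_zero_sub_le (hlam : 0 ≤ lam) (hp : ∀ u, p u ∈ Set.Icc 0 1)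
    (hp' : ∀ u, p' u ∈ Set.Icc 0 1) (hpp' : ∀ x ≠ v, p x = p' x) :
    |levelOdds ch lam p 0 u - levelOdds ch lam p' 0 u| ≤ influence ch lam p₀ 0 u v := by
  rw [influence]
  split_ifs with hv
  · have h := levelOdds_mem_Icc (ch := ch) hlam hp 0 u
    have h' := levelOdds_mem_Icc (ch := ch) hlam hp' 0 u
    exact abs_sub_le_iff.2 ⟨by linarith [h.2, h'.1], by linarith [h.1, h'.2]⟩
  · have heq : ∀ w ∈ ch u, p w = p' w := fun w hw => hpp' w (ne_of_mem_of_not_mem hw hv)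
    rw [levelOdds, levelOdds, prod_congr rfl fun w hw => by rw [heq w hw], sub_self, abs_zero]

theorem abs_levelOdds_succ_sub (hlam : 0 ≤ lam)
    (hch : ∀ ⦃u u' w⦄, w ∈ ch u → w ∈ ch u' → u = u') (hp : ∀ u, p u ∈ Set.Icc 0 1)
    (hp' : ∀ u, p' u ∈ Set.Icc 0 1) (hpp' : {u | p u ≠ p' u}.Subsingleton) (k : ℕ) (u : α) :
    |levelOdds ch lam p (k + 1) u - levelOdds ch lam p' (k + 1) u| =
      levelOdds ch lam p (k + 1) u *
        ∑ w ∈ ch u, |levelOdds ch lam p k w - levelOdds ch lam p' k w| /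
          (1 + levelOdds ch lam p' k w) := by
  have hpos : ∀ {q : α → ℝ}, (∀ u, q u ∈ Set.Icc 0 1) →
      ∀ w ∈ ch u, 0 < 1 + levelOdds ch lam q k w := fun hq w _ => by
    linarith [levelOdds_nonneg (ch := ch) hlam hq k w]
  have hsub : {w | 1 + levelOdds ch lam p k w ≠ 1 + levelOdds ch lam p' k w}.Subsingleton := by
    simpa only [ne_eq, add_right_inj] using subsingleton_levelOdds_ne hch hpp' k
  rw [levelOdds, levelOdds, ← mul_sub, abs_mul, abs_of_nonneg hlam,
    abs_prod_inv_sub_prod_inv (hpos hp) (hpos hp') hsub, mul_assoc]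
  simp only [add_sub_add_left_eq_sub]

theorem div_one_add_levelOdds_le_mul_exp {x y : ℝ} (hδ : 0 ≤ δ) (hlam : 0 ≤ lam)
    (hgap : ∀ u, ∀ w ∈ ch u, HasGap #(ch w) lam δ) (hp : ∀ u, p u ∈ Set.Icc 0 1)
    (hp' : ∀ u, p' u ∈ Set.Icc 0 1) (k : ℕ) {w : α} (hw : w ∈ ch u) (hx : 0 ≤ x) (hxy : x ≤ y) :
    x / (1 + levelOdds ch lam p k w) ≤
      Real.exp (2 * lam * √(1 - δ) ^ k) * (y / (1 + levelOdds ch lam p' k w)) := by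
  have hpos := levelOdds_nonneg (ch := ch) hlam hp k w
  have hpos' := levelOdds_nonneg (ch := ch) hlam hp' k w
  have hcomp := one_add_levelOdds_le_mul_exp hδ hlam hgap hp' hp k hw
  rw [← mul_div_assoc, div_le_div_iff₀ (by linarith) (by linarith)]
  calc x * (1 + levelOdds ch lam p' k w)
      ≤ y * ((1 + levelOdds ch lam p k w) * Real.exp (2 * lam * √(1 - δ) ^ k)) :=
        mul_le_mul hxy hcomp (by linarith) (hx.trans hxy)
    _ = Real.exp (2 * lam * √(1 - δ) ^ k) * y * (1 + levelOdds ch lam p k w) := by ring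

theorem abs_levelOdds_succ_sub_le {C : ℝ} (hδ : 0 ≤ δ) (hlam : 0 ≤ lam)
    (hch : ∀ ⦃u u' w⦄, w ∈ ch u → w ∈ ch u' → u = u')
    (hgap : ∀ u, ∀ w ∈ ch u, HasGap #(ch w) lam δ) (hp : ∀ u, p u ∈ Set.Icc 0 1)
    (hp' : ∀ u, p' u ∈ Set.Icc 0 1) (hp₀ : ∀ u, p₀ u ∈ Set.Icc 0 1)
    (hpp' : {u | p u ≠ p' u}.Subsingleton) {k : ℕ}
    (hC : ∀ w, |levelOdds ch lam p k w - levelOdds ch lam p' k w| ≤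
      C * influence ch lam p₀ k w v) (u : α) :
    |levelOdds ch lam p (k + 1) u - levelOdds ch lam p' (k + 1) u| ≤
      Real.exp (2 * (#(ch u) * lam) * √(1 - δ) ^ k) * (Real.exp (2 * lam * √(1 - δ) ^ k) * C) *
        influence ch lam p₀ (k + 1) u v := by
  rw [abs_levelOdds_succ_sub hlam hch hp hp' hpp', influence]
  set D := Real.exp (2 * (#(ch u) * lam) * √(1 - δ) ^ k)
  set E := Real.exp (2 * lam * √(1 - δ) ^ k)
  calc levelOdds ch lam p (k + 1) u *
        ∑ w ∈ ch u, |levelOdds ch lam p k w - levelOdds ch lam p' k w| /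
          (1 + levelOdds ch lam p' k w)
      ≤ levelOdds ch lam p₀ (k + 1) u * D *
        ∑ w ∈ ch u, E * (C * influence ch lam p₀ k w v / (1 + levelOdds ch lam p₀ k w)) :=
        mul_le_mul (levelOdds_succ_le_mul_exp hδ hlam hgap hp hp₀ k u)
          (sum_le_sum fun w hw => div_one_add_levelOdds_le_mul_exp hδ hlam hgap hp' hp₀ k hw
            (abs_nonneg _) (hC w))
          (sum_nonneg fun w _ => div_nonneg (abs_nonneg _)
            (by linarith [levelOdds_nonneg (ch := ch) hlam hp' k w]))
          (mul_nonneg (levelOdds_nonneg hlam hp₀ _ u) (Real.exp_pos _).le)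
    _ = D * (E * C) * (levelOdds ch lam p₀ (k + 1) u *
        ∑ w ∈ ch u, influence ch lam p₀ k w v / (1 + levelOdds ch lam p₀ k w)) := by
        simp only [mul_div_assoc, ← mul_sum]
        ring

theorem influence_nonneg (hlam : 0 ≤ lam) (hp : ∀ u, p u ∈ Set.Icc 0 1) (k : ℕ) (u : α) :
    0 ≤ influence ch lam p k u v := by
  induction k generalizing u with
  | zero => rw [influence]; split_ifs <;> simp [hlam]
  | succ k ih =>
    exact mul_nonneg (levelOdds_nonneg hlam hp _ u) (sum_nonneg fun w _ =>
      div_nonneg (ih w) (by linarith [levelOdds_nonneg (ch := ch) hlam hp k w]))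

theorem abs_levelOdds_sub_le (hδ : 0 ≤ δ) (hlam : 0 ≤ lam)
    (hch : ∀ ⦃u u' w⦄, w ∈ ch u → w ∈ ch u' → u = u')
    (hgap : ∀ u, ∀ w ∈ ch u, HasGap #(ch w) lam δ) (hcard : ∀ u, #(ch u) * lam ≤ K)
    (hlamK : lam ≤ K) (hp : ∀ u, p u ∈ Set.Icc 0 1) (hp' : ∀ u, p' u ∈ Set.Icc 0 1)
    (hp₀ : ∀ u, p₀ u ∈ Set.Icc 0 1) (hpp' : ∀ x ≠ v, p x = p' x) (k : ℕ) (u : α) :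
    |levelOdds ch lam p k u - levelOdds ch lam p' k u| ≤
      Real.exp (4 * K * ∑ j ∈ range k, √(1 - δ) ^ j) * influence ch lam p₀ k u v := by
  induction k generalizing u with
  | zero => simpa using abs_levelOdds_zero_sub_le (p₀ := p₀) hlam hp hp' hpp'
  | succ k ih =>
    have hsub : {x | p x ≠ p' x}.Subsingleton := fun x hx y hy =>
      (not_imp_comm.1 (hpp' x) hx).trans (not_imp_comm.1 (hpp' y) hy).symm
    refine (abs_levelOdds_succ_sub_le hδ hlam hch hgap hp hp' hp₀ hsub ih u).trans ?_
    have := influence_nonneg (ch := ch) (v := v) hlam hp₀ (k + 1) u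
    rw [← Real.exp_add, ← Real.exp_add]
    gcongr
    calc _ ≤ 2 * K * √(1 - δ) ^ k + (2 * K * √(1 - δ) ^ k +
          4 * K * ∑ j ∈ range k, √(1 - δ) ^ j) := by
          gcongr
          exact hcard u
      _ = _ := by rw [sum_range_succ]; ring

theorem sqrt_mul_one_add_div_one_add {x : ℝ} (hx : 0 ≤ x) :
    √(x * (1 + x)) / (1 + x) = √(x / (1 + x)) := by
  rw [Real.sqrt_mul hx, Real.sqrt_div hx, mul_div_assoc, Real.sqrt_div_self']
  ring

theorem sqrt_mul_one_add_mul_sqrt_div_one_add {x : ℝ} (hx : 0 ≤ x) :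
    √(x * (1 + x)) * √(x / (1 + x)) = x := by
  rw [← Real.sqrt_mul (by positivity), mul_assoc, mul_div_cancel₀ _ (by positivity),
    Real.sqrt_mul_self hx]

theorem sum_influence_zero_le (hlam : 0 ≤ lam) (hcard : ∀ u, #(ch u) * lam ≤ K) (t : Finset α)
    (u : α) : ∑ v ∈ t, influence ch lam p 0 u v ≤ K := calc
  ∑ v ∈ t, influence ch lam p 0 u v = #(t.filter (· ∈ ch u)) * lam := by
    simp only [influence, ← sum_filter, sum_const, nsmul_eq_mul]
  _ ≤ #(ch u) * lam := by
    gcongr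
    exact fun v hv => (mem_filter.1 hv).2
  _ ≤ K := hcard u

theorem sum_influence_succ_eq (t : Finset α) (k : ℕ) (u : α) :
    ∑ v ∈ t, influence ch lam p (k + 1) u v = levelOdds ch lam p (k + 1) u *
      ∑ w ∈ ch u, (∑ v ∈ t, influence ch lam p k w v) / (1 + levelOdds ch lam p k w) := by
  simp only [influence, ← mul_sum, sum_div]
  rw [sum_comm]

theorem sum_influence_succ_le {B : ℝ} (hlam : 0 ≤ lam) (hp : ∀ u, p u ∈ Set.Icc 0 1)
    {t : Finset α} {k : ℕ} {u : α}
    (hB : ∀ w ∈ ch u, ∑ v ∈ t, influence ch lam p k w v ≤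
      B * √(levelOdds ch lam p k w * (1 + levelOdds ch lam p k w))) :
    ∑ v ∈ t, influence ch lam p (k + 1) u v ≤ B * (levelOdds ch lam p (k + 1) u *
      ∑ w ∈ ch u, √(levelOdds ch lam p k w / (1 + levelOdds ch lam p k w))) := by
  rw [sum_influence_succ_eq, mul_left_comm B, mul_sum (ch u) _ B]
  refine mul_le_mul_of_nonneg_left (sum_le_sum fun w hw => ?_) (levelOdds_nonneg hlam hp _ u)
  have hpos := levelOdds_nonneg (ch := ch) hlam hp k w
  rw [← sqrt_mul_one_add_div_one_add hpos, ← mul_div_assoc]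
  exact div_le_div_of_nonneg_right (hB w hw) (by linarith)

theorem sum_influence_child_le (hδ : 0 ≤ δ) (hlam : 0 < lam)
    (hgap : ∀ u, ∀ w ∈ ch u, HasGap #(ch w) lam δ) (hcard : ∀ u, #(ch u) * lam ≤ K)
    (t : Finset α) (k : ℕ) {u w : α} (hw : w ∈ ch u) :
    ∑ v ∈ t, influence ch lam 0 k w v ≤ K / √lam * √(1 - δ) ^ k *
      √(levelOdds ch lam 0 k w * (1 + levelOdds ch lam 0 k w)) := by
  have hp : ∀ u, (0 : α → ℝ) u ∈ Set.Icc 0 1 := fun _ => ⟨le_rfl, zero_le_one⟩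
  have hK : 0 ≤ K := (mul_nonneg (Nat.cast_nonneg _) hlam.le).trans (hcard u)
  induction k generalizing u w with
  | zero =>
    have hlevel : levelOdds ch lam 0 0 w = lam := by simp [levelOdds]
    refine (sum_influence_zero_le hlam.le hcard t w).trans ?_
    rw [hlevel, pow_zero, mul_one, div_mul_eq_mul_div, le_div_iff₀ (Real.sqrt_pos.2 hlam)]
    gcongr
    nlinarith
  | succ k ih =>
    have hpos := levelOdds_nonneg (ch := ch) hlam.le hp
    have hdecay := (hgap u w hw).sqrt_mul_sum_sqrt_le hδ (fun x _ => hpos k x)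
      (y := levelOdds ch lam 0 (k + 1) w) rfl
    refine (sum_influence_succ_le hlam.le hp fun x hx => ih hx).trans ?_
    set L := levelOdds ch lam 0 (k + 1) w
    set Q := ∑ x ∈ ch w, √(levelOdds ch lam 0 k x / (1 + levelOdds ch lam 0 k x))
    calc K / √lam * √(1 - δ) ^ k * (L * Q)
        = K / √lam * √(1 - δ) ^ k * (√(L * (1 + L)) * (√(L / (1 + L)) * Q)) := by
          rw [← mul_assoc √(L * (1 + L)),
            sqrt_mul_one_add_mul_sqrt_div_one_add (hpos (k + 1) w)]
      _ ≤ K / √lam * √(1 - δ) ^ k * (√(L * (1 + L)) * √(1 - δ)) := by gcongr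
      _ = K / √lam * √(1 - δ) ^ (k + 1) * √(L * (1 + L)) := by ring

theorem sum_influence_succ_le_sq_mul_pow (hδ : 0 ≤ δ) (hlam : 0 < lam)
    (hgap : ∀ u, ∀ w ∈ ch u, HasGap #(ch w) lam δ) (hcard : ∀ u, #(ch u) * lam ≤ K)
    (t : Finset α) (k : ℕ) (u : α) :
    ∑ v ∈ t, influence ch lam 0 (k + 1) u v ≤ K ^ 2 * √(1 - δ) ^ k := by
  have hp : ∀ u, (0 : α → ℝ) u ∈ Set.Icc 0 1 := fun _ => ⟨le_rfl, zero_le_one⟩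
  have hK : 0 ≤ K := (mul_nonneg (Nat.cast_nonneg _) hlam.le).trans (hcard u)
  have hroot : ∀ w ∈ ch u, √(levelOdds ch lam 0 k w / (1 + levelOdds ch lam 0 k w)) ≤ √lam :=
    fun w _ => by
      have h := levelOdds_mem_Icc (ch := ch) hlam.le hp k w
      exact Real.sqrt_le_sqrt ((div_le_self h.1 (by linarith [h.1])).trans h.2)
  refine (sum_influence_succ_le hlam.le hp fun w hw =>
    sum_influence_child_le hδ hlam hgap hcard t k hw).trans ?_
  calc K / √lam * √(1 - δ) ^ k * (levelOdds ch lam 0 (k + 1) u *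
        ∑ w ∈ ch u, √(levelOdds ch lam 0 k w / (1 + levelOdds ch lam 0 k w)))
      ≤ K / √lam * √(1 - δ) ^ k * (lam * (#(ch u) • √lam)) := by
        gcongr
        · exact (levelOdds_mem_Icc hlam.le hp (k + 1) u).2
        · exact sum_le_card_nsmul _ _ _ hroot
    _ = K * (#(ch u) * lam) * √(1 - δ) ^ k := by
        rw [nsmul_eq_mul]
        field_simp
    _ ≤ K ^ 2 * √(1 - δ) ^ k := by
        rw [sq]
        gcongr
        exact hcard u

end Influence

section Tree

/-- The neighbours of `u` that lie one step further from the root `r`; in a tree these are the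
children of `u`. -/
def children (G : SimpleGraph V) (r u : V) : Finset V :=
  univ.filter fun w => G.Adj u w ∧ G.dist r w = G.dist r u + 1

variable {G : SimpleGraph V} {r u u' w : V} {Δ : ℕ}

theorem mem_children : w ∈ children G r u ↔ G.Adj u w ∧ G.dist r w = G.dist r u + 1 := by
  simp [children]

theorem mem_levelSet {ℓ : ℕ} : u ∈ levelSet G r ℓ ↔ G.dist r u = ℓ := by
  simp [levelSet]

theorem levelSet_zero (hG : G.IsTree) : levelSet G r 0 = {r} := by
  ext v
  rw [mem_levelSet, hG.connected.dist_eq_zero_iff, mem_singleton, eq_comm]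

theorem ne_root_of_mem_children (hw : w ∈ children G r u) : w ≠ r := by
  rintro rfl
  simpa using (mem_children.1 hw).2

theorem eq_of_mem_children (hG : G.IsTree) (hu : w ∈ children G r u) (hu' : w ∈ children G r u') :
    u = u' := by
  obtain ⟨hadj, hdist⟩ := mem_children.1 hu
  obtain ⟨hadj', hdist'⟩ := mem_children.1 hu'
  obtain ⟨q, -, hq⟩ := hG.connected.exists_path_of_dist r u
  obtain ⟨q', -, hq'⟩ := hG.connected.exists_path_of_dist r u'
  have hpath := (q.concat hadj).isPath_of_length_eq_dist (by simp [hdist, hq])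
  have hpath' := (q'.concat hadj').isPath_of_length_eq_dist (by simp [hdist', hq'])
  simpa using congrArg (fun x : G.Path r w => x.1.penultimate)
    ((hG.isAcyclic.subsingleton_path r w).elim ⟨_, hpath⟩ ⟨_, hpath'⟩)

theorem exists_mem_children (hG : G.IsTree) (hw : w ≠ r) : ∃ u, w ∈ children G r u := by
  obtain ⟨q, hq⟩ := hG.connected.exists_walk_length_eq_dist r w
  have hnil : ¬ q.Nil := SimpleGraph.Walk.not_nil_of_ne hw.symm
  have hadj := q.adj_penultimate hnil
  have hle : G.dist r q.penultimate ≤ q.dropLast.length := SimpleGraph.dist_le _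
  have hlen := SimpleGraph.Walk.length_dropLast_add_one hnil
  have hdist := hG.dist_eq_dist_add_one_of_adj r hadj
  exact ⟨q.penultimate, mem_children.2 ⟨hadj, by omega⟩⟩

theorem card_children_le (hΔ : ∀ v, (G.neighborSet v).ncard ≤ Δ) (u : V) :
    #(children G r u) ≤ Δ := by
  refine le_trans ?_ (hΔ u)
  rw [← Set.ncard_coe_finset]
  exact Set.ncard_le_ncard fun w hw => (mem_children.1 hw).1

theorem card_children_le_pred (hG : G.IsTree) (hΔ : ∀ v, (G.neighborSet v).ncard ≤ Δ)
    (hu : u ≠ r) : #(children G r u) ≤ Δ - 1 := by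
  obtain ⟨a, ha⟩ := exists_mem_children hG hu
  obtain ⟨hadj, hdist⟩ := mem_children.1 ha
  have hnotMem : a ∉ children G r u := fun h => by
    have := (mem_children.1 h).2
    omega
  have hsub : (↑(insert a (children G r u)) : Set V) ⊆ G.neighborSet u := by
    intro w hw
    rcases mem_insert.1 (mem_coe.1 hw) with rfl | hw
    · exact hadj.symm
    · exact (mem_children.1 hw).1
  have hcard := (Set.ncard_le_ncard hsub).trans (hΔ u)
  rw [Set.ncard_coe_finset, card_insert_of_notMem hnotMem] at hcard
  exact Nat.le_sub_one_of_lt hcard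

theorem biUnion_children (hG : G.IsTree) (ℓ : ℕ) :
    (levelSet G r ℓ).biUnion (children G r) = levelSet G r (ℓ + 1) := by
  ext w
  simp only [mem_biUnion, mem_levelSet]
  constructor
  · rintro ⟨u, hu, hw⟩
    rw [(mem_children.1 hw).2, hu]
  · intro hw
    obtain ⟨u, hu⟩ := exists_mem_children hG (w := w) (r := r) (by rintro rfl; simp at hw)
    exact ⟨u, by have := (mem_children.1 hu).2; omega, hu⟩

theorem prod_levelSet_succ (hG : G.IsTree) (ℓ : ℕ) (f : V → ℝ) :
    ∏ w ∈ levelSet G r (ℓ + 1), f w = ∏ u ∈ levelSet G r ℓ, ∏ w ∈ children G r u, f w := by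
  rw [← biUnion_children hG, prod_biUnion]
  exact fun u _ u' _ hne => disjoint_left.2 fun w hw hw' => hne (eq_of_mem_children hG hw hw')

theorem exists_adj_iff_of_mem_children (hG : G.IsTree) {S : Finset V}
    (hS : ∀ v ∈ S, G.dist r v ≤ G.dist r u) (hw : w ∈ children G r u) :
    (∃ v ∈ S, G.Adj v w) ↔ u ∈ S := by
  refine ⟨?_, fun hu => ⟨u, hu, (mem_children.1 hw).1⟩⟩
  rintro ⟨v, hv, hadj⟩
  have hle := hS v hv
  have hdist := (mem_children.1 hw).2
  have hstep := hG.dist_eq_dist_add_one_of_adj r hadj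
  rwa [eq_of_mem_children hG hw (mem_children.2 ⟨hadj, by omega⟩)]

theorem isIndepSet_union_iff {α : Type*} {G : SimpleGraph α} (hG : G.IsTree) {r : α} {ℓ : ℕ}
    {S A : Finset α} (hA : ∀ w ∈ A, G.dist r w = ℓ) :
    IsIndepSet G (S ∪ A) ↔ IsIndepSet G S ∧ ∀ w ∈ A, ¬ ∃ v ∈ S, G.Adj v w := by
  constructor
  · refine fun h => ⟨fun i hi j hj => h i (mem_union_left _ hi) j (mem_union_left _ hj), ?_⟩
    rintro w hw ⟨v, hv, hadj⟩
    exact h v (mem_union_left _ hv) w (mem_union_right _ hw) hadj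
  · rintro ⟨hS, hSA⟩ i hi j hj hadj
    rcases mem_union.1 hi with hi | hi <;> rcases mem_union.1 hj with hj | hj
    · exact hS i hi j hj hadj
    · exact hSA j hj ⟨i, hi, hadj⟩
    · exact hSA i hi ⟨j, hj, hadj.symm⟩
    · exact hG.dist_ne_of_adj r hadj (by rw [hA i hi, hA j hj])

theorem isIndepSet_union_and_dist_le_iff {α : Type*} {G : SimpleGraph α} (hG : G.IsTree) {r : α}
    {ℓ : ℕ} {S A : Finset α} (hA : ∀ w ∈ A, G.dist r w = ℓ + 1)
    (hS : ∀ v ∈ S, G.dist r v ≠ ℓ + 1) :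
    (IsIndepSet G (S ∪ A) ∧ ∀ v ∈ S ∪ A, G.dist r v ≤ ℓ + 1) ↔
      (IsIndepSet G S ∧ ∀ v ∈ S, G.dist r v ≤ ℓ) ∧ ∀ w ∈ A, ¬ ∃ v ∈ S, G.Adj v w := by
  have hball : (∀ v ∈ S ∪ A, G.dist r v ≤ ℓ + 1) ↔ ∀ v ∈ S, G.dist r v ≤ ℓ := by
    refine ⟨fun h v hv => Nat.le_of_lt_succ ((h v (mem_union_left _ hv)).lt_of_ne (hS v hv)),
      fun h v hv => ?_⟩
    exact (mem_union.1 hv).elim (fun hv => (h v hv).trans ℓ.le_succ) fun hv => (hA v hv).le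
  rw [hball, isIndepSet_union_iff hG hA, and_right_comm]

end Tree

section PinnedMeasure

variable {G : SimpleGraph V} {r : V} {lam : ℝ} {p : V → ℝ}

theorem sum_finset_eq_sum_disjoint_sum_powerset (L : Finset V) (f : Finset V → ℝ) :
    ∑ S, f S = ∑ S with Disjoint S L, ∑ A ∈ L.powerset, f (S ∪ A) := by
  rw [← sum_product']
  refine sum_bij' (fun S _ => (S \ L, S ∩ L)) (fun x _ => x.1 ∪ x.2) ?_ ?_ ?_ ?_ ?_
  · exact fun S _ => by simp [sdiff_disjoint, inter_subset_right]
  · exact fun _ _ => mem_univ _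
  · exact fun S _ => sdiff_union_inter S L
  · rintro ⟨S, A⟩ hSA
    simp only [mem_product, mem_filter, mem_univ, true_and, mem_powerset] at hSA
    obtain ⟨hS, hA⟩ := hSA
    rw [union_sdiff_distrib, sdiff_eq_self_of_disjoint hS, sdiff_eq_empty_iff_subset.2 hA,
      union_empty, union_inter_distrib_right, disjoint_iff_inter_eq_empty.1 hS, empty_union,
      inter_eq_left.2 hA]
  · exact fun S _ => by rw [sdiff_union_inter]

theorem prMem_eq_of_sum_powerset {w w' : Finset V → ℝ} {Z : ℝ} (hZ : Z ≠ 0) {L : Finset V}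
    {x : V} (hx : x ∉ L)
    (hw : ∀ S, Disjoint S L → ∑ A ∈ L.powerset, w (S ∪ A) = Z * w' S)
    (hw' : ∀ S, ¬ Disjoint S L → w' S = 0) : prMem w x = prMem w' x := by
  have hsum : ∀ c : Finset V → ℝ, (∀ S, ∀ A ⊆ L, c (S ∪ A) = c S) →
      ∑ S, c S * w S = Z * ∑ S, c S * w' S := fun c hc => by
    have hsupp : ∑ S, c S * w' S = ∑ S with Disjoint S L, c S * w' S :=
      (sum_filter_of_ne fun S _ hS => by
        contrapose! hS
        rw [hw' S hS, mul_zero]).symm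
    rw [sum_finset_eq_sum_disjoint_sum_powerset L, hsupp, mul_sum]
    refine sum_congr rfl fun S hS => ?_
    rw [mul_left_comm, ← hw S (mem_filter.1 hS).2, mul_sum]
    exact sum_congr rfl fun A hA => by rw [hc S A (mem_powerset.1 hA)]
  have hnum := hsum (fun S => if x ∈ S then 1 else 0) fun S A hA => by
    simp [mt (@hA x) hx]
  have hden := hsum (fun _ => 1) fun _ _ _ => rfl
  simp only [ite_mul, one_mul, zero_mul] at hnum hden
  rw [prMem, prMem, hnum, hden, mul_div_mul_left _ _ hZ]

theorem pinWeight_eq_ite_mul_prod (ℓ : ℕ) (P S : Finset V) :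
    pinWeight G r lam ℓ P p S =
      (if IsIndepSet G S ∧ ∀ v ∈ S, G.dist r v ≤ ℓ then
        lam ^ #(S.filter fun v => G.dist r v < ℓ) else 0) *
      ∏ u ∈ P, if u ∈ S then p u else 1 - p u := by
  rw [pinWeight, prod_ite, filter_mem_eq_inter, filter_notMem_eq_sdiff, ite_mul, zero_mul,
    mul_assoc]

theorem pinWeight_update {P : Finset V} {v : V} (hv : v ∈ P) (ℓ : ℕ) (a : ℝ) (S : Finset V) :
    pinWeight G r lam ℓ P (Function.update p v a) S =
      (if v ∈ S then a else 1 - a) * pinWeight G r lam ℓ (P.erase v) p S := by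
  rw [pinWeight_eq_ite_mul_prod, pinWeight_eq_ite_mul_prod, ← mul_prod_erase P _ hv,
    Function.update_self, mul_left_comm]
  congr 2
  exact prod_congr rfl fun u hu => by rw [Function.update_of_ne (ne_of_mem_erase hu)]

theorem wIn_eq_pinWeight (v : V) :
    wIn G r lam v p = pinWeight G r lam (G.dist r v) (levelSet G r (G.dist r v))
      (Function.update p v 1) := by
  ext S
  rw [pinWeight_update (mem_levelSet.2 rfl), wIn]
  split_ifs <;> simp

theorem wOut_eq_pinWeight (v : V) :
    wOut G r lam v p = pinWeight G r lam (G.dist r v) (levelSet G r (G.dist r v))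
      (Function.update p v 0) := by
  ext S
  rw [pinWeight_update (mem_levelSet.2 rfl), wOut]
  split_ifs <;> simp

theorem pinWeight_union (hG : G.IsTree) {ℓ : ℕ} {S A : Finset V}
    (hS : Disjoint S (levelSet G r (ℓ + 1))) (hA : A ⊆ levelSet G r (ℓ + 1)) :
    pinWeight G r lam (ℓ + 1) (levelSet G r (ℓ + 1)) p (S ∪ A) =
      (if IsIndepSet G S ∧ ∀ v ∈ S, G.dist r v ≤ ℓ then lam ^ #S else 0) *
        ((∏ w ∈ A, if ∃ v ∈ S, G.Adj v w then 0 else p w) *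
          ∏ w ∈ levelSet G r (ℓ + 1) \ A, (1 - p w)) := by
  have hdistA : ∀ w ∈ A, G.dist r w = ℓ + 1 := fun w hw => mem_levelSet.1 (hA hw)
  have hvalid := isIndepSet_union_and_dist_le_iff hG (S := S) hdistA
    fun v hv hdist => disjoint_left.1 hS hv (mem_levelSet.2 hdist)
  have hinter : levelSet G r (ℓ + 1) ∩ (S ∪ A) = A := by
    rw [inter_union_distrib_left, disjoint_iff_inter_eq_empty.1 hS.symm, empty_union,
      inter_eq_right.2 hA]
  have hsdiff : levelSet G r (ℓ + 1) \ (S ∪ A) = levelSet G r (ℓ + 1) \ A := by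
    rw [← sdiff_inter_self_left, hinter]
  rw [pinWeight, hinter, hsdiff]
  by_cases hball : IsIndepSet G S ∧ ∀ v ∈ S, G.dist r v ≤ ℓ
  swap
  · rw [if_neg fun h => hball (hvalid.1 h).1, if_neg hball, zero_mul]
  by_cases hfree : ∀ w ∈ A, ¬ ∃ v ∈ S, G.Adj v w
  · have hfilter : (S ∪ A).filter (fun v => G.dist r v < ℓ + 1) = S := by
      rw [filter_union, filter_true_of_mem fun v hv => Nat.lt_succ_of_le (hball.2 v hv),
        filter_false_of_mem fun v hv => (hdistA v hv).not_lt, union_empty]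
    rw [if_pos (hvalid.2 ⟨hball, hfree⟩), if_pos hball, hfilter, mul_assoc,
      prod_congr rfl fun w hw => (if_neg (hfree w hw)).symm]
  · push Not at hfree
    obtain ⟨w, hw, v, hv, hadj⟩ := hfree
    have hzero : ∏ w ∈ A, (if ∃ v ∈ S, G.Adj v w then 0 else p w) = 0 :=
      prod_eq_zero hw (if_pos ⟨v, hv, hadj⟩)
    rw [if_neg fun h => (hvalid.1 h).2 w hw ⟨v, hv, hadj⟩, hzero, zero_mul, mul_zero]

theorem prod_levelSet_succ_blocked (hG : G.IsTree) {ℓ : ℕ} {S : Finset V}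
    (hS : ∀ v ∈ S, G.dist r v ≤ ℓ) :
    ∏ w ∈ levelSet G r (ℓ + 1), ((if ∃ v ∈ S, G.Adj v w then 0 else p w) + (1 - p w)) =
      ∏ u ∈ levelSet G r ℓ, if u ∈ S then ∏ w ∈ children G r u, (1 - p w) else 1 := by
  rw [prod_levelSet_succ hG]
  refine prod_congr rfl fun u hu => ?_
  have hblock : ∀ w ∈ children G r u, (∃ v ∈ S, G.Adj v w) ↔ u ∈ S := fun w hw =>
    exists_adj_iff_of_mem_children hG (by rwa [mem_levelSet.1 hu]) hw
  split_ifs with huS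
  · exact prod_congr rfl fun w hw => by rw [if_pos ((hblock w hw).2 huS), zero_add]
  · exact prod_eq_one fun w hw => by
      rw [if_neg (mt (hblock w hw).1 huS), add_sub_cancel]

theorem pow_card_eq_mul_prod_levelSet {ℓ : ℕ} {S : Finset V} (hS : ∀ v ∈ S, G.dist r v ≤ ℓ) :
    lam ^ #S = lam ^ #(S.filter fun v => G.dist r v < ℓ) *
      ∏ u ∈ levelSet G r ℓ, if u ∈ S then lam else 1 := by
  have hlevel : S.filter (fun v => ¬ G.dist r v < ℓ) = levelSet G r ℓ ∩ S := by
    ext v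
    simp only [mem_filter, mem_inter, mem_levelSet, not_lt]
    exact ⟨fun h => ⟨(hS v h.1).antisymm h.2, h.1⟩, fun h => ⟨h.2, h.1.ge⟩⟩
  rw [← card_filter_add_card_filter_not (s := S) (fun v => G.dist r v < ℓ), pow_add, hlevel,
    prod_ite_mem, prod_const]

/-- The probability that `u` is occupied in the hardcore model on `u` and its children `ch u`, the
latter being occupied with probabilities `p`. Pinning a level to `p` has the same effect on the
levels above it as pinning its parents to their occupation probabilities. -/
def occupation {α : Type*} (ch : α → Finset α) (lam : ℝ) (p : α → ℝ) (u : α) : ℝ :=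
  levelOdds ch lam p 0 u / (1 + levelOdds ch lam p 0 u)

theorem occupation_mem_Icc {α : Type*} {ch : α → Finset α} {p : α → ℝ} (hlam : 0 ≤ lam)
    (hp : ∀ u, p u ∈ Set.Icc 0 1) (u : α) : occupation ch lam p u ∈ Set.Icc 0 1 := by
  have hpos := levelOdds_nonneg (ch := ch) hlam hp 0 u
  exact ⟨by unfold occupation; positivity, div_le_one_of_le₀ (by linarith) (by linarith)⟩

theorem one_sub_occupation {α : Type*} {ch : α → Finset α} {p : α → ℝ} (hlam : 0 ≤ lam)
    (hp : ∀ u, p u ∈ Set.Icc 0 1) (u : α) :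
    1 - occupation ch lam p u = (1 + levelOdds ch lam p 0 u)⁻¹ := by
  have hpos := levelOdds_nonneg (ch := ch) hlam hp 0 u
  rw [occupation]
  field_simp
  ring

theorem levelOdds_occupation {α : Type*} {ch : α → Finset α} {p : α → ℝ} (hlam : 0 ≤ lam)
    (hp : ∀ u, p u ∈ Set.Icc 0 1) (k : ℕ) (u : α) :
    levelOdds ch lam (occupation ch lam p) k u = levelOdds ch lam p (k + 1) u := by
  induction k generalizing u with
  | zero => simp only [levelOdds, one_sub_occupation hlam hp]
  | succ k ih =>
    rw [levelOdds, levelOdds]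
    simp only [ih]

theorem one_add_levelOdds_mul_occupation {α : Type*} {ch : α → Finset α} {p : α → ℝ}
    (hlam : 0 ≤ lam) (hp : ∀ u, p u ∈ Set.Icc 0 1) (u : α) (c : Prop) [Decidable c] :
    (1 + levelOdds ch lam p 0 u) *
        (if c then occupation ch lam p u else 1 - occupation ch lam p u) =
      (if c then lam else 1) * if c then ∏ w ∈ ch u, (1 - p w) else 1 := by
  have hpos : 0 < 1 + levelOdds ch lam p 0 u := by
    linarith [levelOdds_nonneg (ch := ch) hlam hp 0 u]
  split_ifs
  · rw [occupation, mul_div_cancel₀ _ hpos.ne', levelOdds]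
  · rw [one_sub_occupation hlam hp, mul_inv_cancel₀ hpos.ne', one_mul]

theorem sum_pinWeight_union (hG : G.IsTree) (hlam : 0 ≤ lam) (hp : ∀ u, p u ∈ Set.Icc 0 1)
    (ℓ : ℕ) {S : Finset V} (hS : Disjoint S (levelSet G r (ℓ + 1))) :
    ∑ A ∈ (levelSet G r (ℓ + 1)).powerset,
        pinWeight G r lam (ℓ + 1) (levelSet G r (ℓ + 1)) p (S ∪ A) =
      (∏ u ∈ levelSet G r ℓ, (1 + levelOdds (children G r) lam p 0 u)) *
        pinWeight G r lam ℓ (levelSet G r ℓ) (occupation (children G r) lam p) S := by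
  rw [sum_congr rfl fun A hA => pinWeight_union hG hS (mem_powerset.1 hA), ← mul_sum, ← prod_add,
    pinWeight_eq_ite_mul_prod, mul_left_comm, ← prod_mul_distrib]
  simp only [one_add_levelOdds_mul_occupation hlam hp]
  split_ifs with hball
  · rw [prod_levelSet_succ_blocked hG hball.2, pow_card_eq_mul_prod_levelSet hball.2,
      prod_mul_distrib, mul_assoc]
  · rw [zero_mul, zero_mul]

theorem prMem_pinWeight_succ (hG : G.IsTree) (hlam : 0 ≤ lam) (hp : ∀ u, p u ∈ Set.Icc 0 1)
    (ℓ : ℕ) {x : V} (hx : G.dist r x ≤ ℓ) :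
    prMem (pinWeight G r lam (ℓ + 1) (levelSet G r (ℓ + 1)) p) x =
      prMem (pinWeight G r lam ℓ (levelSet G r ℓ) (occupation (children G r) lam p)) x := by
  refine prMem_eq_of_sum_powerset (prod_ne_zero_iff.2 fun u _ => ?_)
    (by rw [mem_levelSet]; omega) (fun S hS => sum_pinWeight_union hG hlam hp ℓ hS) fun S hS => ?_
  · linarith [levelOdds_nonneg (ch := children G r) hlam hp 0 u]
  · obtain ⟨v, hv, hlevel⟩ := not_disjoint_iff.1 hS
    rw [pinWeight, if_neg fun h => (h.2 v hv).not_gt (by rw [mem_levelSet.1 hlevel]; omega)]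

theorem prMem_pinWeight_zero (hG : G.IsTree) :
    prMem (pinWeight G r lam 0 (levelSet G r 0) p) r = p r := by
  have hsupp : ∀ S ∉ ({∅, {r}} : Finset (Finset V)), pinWeight G r lam 0 {r} p S = 0 := by
    intro S hS
    rw [pinWeight, if_neg]
    rintro ⟨-, hball⟩
    have hsub : S ⊆ {r} := fun v hv => by
      rw [← levelSet_zero hG]
      exact mem_levelSet.2 (Nat.le_zero.1 (hball v hv))
    exact hS (by simpa using subset_singleton_iff.1 hsub)
  have hempty : pinWeight G r lam 0 {r} p ∅ = 1 - p r := by simp [pinWeight, IsIndepSet]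
  have hroot : pinWeight G r lam 0 {r} p {r} = p r := by simp [pinWeight, IsIndepSet]
  rw [levelSet_zero hG, prMem,
    ← sum_subset (subset_univ {∅, {r}}) fun S _ hS => by rw [hsupp S hS, ite_self],
    ← sum_subset (subset_univ {∅, {r}}) fun S _ hS => hsupp S hS,
    sum_pair (singleton_ne_empty r).symm, sum_pair (singleton_ne_empty r).symm, hempty, hroot]
  simp

theorem ratio_pinWeight_succ (hG : G.IsTree) (hlam : 0 ≤ lam) (hp : ∀ u, p u ∈ Set.Icc 0 1)
    (k : ℕ) :
    ratio (pinWeight G r lam (k + 1) (levelSet G r (k + 1)) p) r =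
      levelOdds (children G r) lam p k r := by
  induction k generalizing p with
  | zero =>
    have hpos := levelOdds_nonneg (ch := children G r) hlam hp 0 r
    rw [ratio, prMem_pinWeight_succ hG hlam hp 0 (by simp), prMem_pinWeight_zero hG,
      one_sub_occupation hlam hp, occupation]
    field_simp
  | succ k ih =>
    rw [ratio, prMem_pinWeight_succ hG hlam hp (k + 1) (by simp), ← ratio,
      ih (occupation_mem_Icc hlam hp), levelOdds_occupation hlam hp]

theorem Rpseudo_le (hG : G.IsTree) (hlam : 0 ≤ lam) {v : V} {k : ℕ} (hv : G.dist r v = k + 1)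
    {J : ℝ} (hJ : ∀ p p' : V → ℝ, (∀ u, p u ∈ Set.Icc 0 1) → (∀ u, p' u ∈ Set.Icc 0 1) →
      (∀ x ≠ v, p x = p' x) →
        |levelOdds (children G r) lam p k r - levelOdds (children G r) lam p' k r| ≤ J) :
    Rpseudo G r lam v ≤ J := by
  refine csSup_le ⟨_, fun _ => 0, by simp, rfl⟩ ?_
  rintro _ ⟨p, hp, rfl⟩
  have hupdate : ∀ a ∈ Set.Icc (0 : ℝ) 1, ∀ u, Function.update p v a u ∈ Set.Icc 0 1 :=
    fun a ha => Function.forall_update_iff p (p := fun _ y => y ∈ Set.Icc (0 : ℝ) 1) |>.2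
      ⟨ha, fun u _ => hp u⟩
  have hone := hupdate 1 ⟨zero_le_one, le_rfl⟩
  have hzero := hupdate 0 ⟨le_rfl, zero_le_one⟩
  rw [wIn_eq_pinWeight, wOut_eq_pinWeight, hv, ratio_pinWeight_succ hG hlam hone,
    ratio_pinWeight_succ hG hlam hzero]
  exact hJ _ _ hone hzero fun x hx => by rw [Function.update_of_ne hx, Function.update_of_ne hx]

end PinnedMeasure

section TotalInfluence

theorem geom_sum_sqrt_one_sub_le {δ : ℝ} (hδ : 0 < δ) (hδ1 : δ ≤ 1) (n : ℕ) :
    ∑ j ∈ range n, √(1 - δ) ^ j ≤ 2 / δ := by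
  have hsqrt : √(1 - δ) ≤ 1 - δ / 2 := by
    rw [Real.sqrt_le_left (by linarith)]
    nlinarith [sq_nonneg δ]
  have hgeom := geom_sum_mul_neg √(1 - δ) n
  have hsum : 0 ≤ ∑ j ∈ range n, √(1 - δ) ^ j := by positivity
  have hpow : 0 ≤ √(1 - δ) ^ n := by positivity
  rw [le_div_iff₀ hδ]
  nlinarith

variable {G : SimpleGraph V} {r : V} {lam δ K : ℝ}

theorem sum_erase_root_le (hG : G.IsTree) {f : V → ℝ} {g : ℕ → V → ℝ} (hg : ∀ k v, 0 ≤ g k v)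
    (hf : ∀ k v, G.dist r v = k + 1 → f v ≤ g k v) :
    ∃ N, ∑ v ∈ univ.erase r, f v ≤ ∑ k ∈ range (N + 1), ∑ v, g k v := by
  refine ⟨univ.sup (G.dist r), ?_⟩
  rw [sum_comm]
  refine (sum_le_sum fun v hv => ?_).trans
    (sum_le_sum_of_subset_of_nonneg (subset_univ _) fun v _ _ => sum_nonneg fun k _ => hg k v)
  have hpos := hG.connected.pos_dist_of_ne (ne_of_mem_erase hv).symm
  have hle : G.dist r v ≤ univ.sup (G.dist r) := le_sup (mem_univ v)
  exact (hf (G.dist r v - 1) v (by omega)).trans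
    (single_le_sum (f := fun k => g k v) (fun k _ => hg k v) (mem_range.2 (by omega)))

theorem sum_range_sum_influence_le (hδ : 0 < δ) (hδ1 : δ ≤ 1) (hlam : 0 < lam)
    {α : Type*} {ch : α → Finset α}
    (hgap : ∀ u, ∀ w ∈ ch u, HasGap #(ch w) lam δ) (hcard : ∀ u, #(ch u) * lam ≤ K)
    (t : Finset α) (n : ℕ) (u : α) :
    ∑ k ∈ range (n + 1), ∑ v ∈ t, influence ch lam 0 k u v ≤ K + K ^ 2 * (2 / δ) := by
  rw [sum_range_succ', add_comm]
  refine add_le_add (sum_influence_zero_le hlam.le hcard t u) ?_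
  calc ∑ k ∈ range n, ∑ v ∈ t, influence ch lam 0 (k + 1) u v
      ≤ ∑ k ∈ range n, K ^ 2 * √(1 - δ) ^ k :=
        sum_le_sum fun k _ => sum_influence_succ_le_sq_mul_pow hδ.le hlam hgap hcard t k u
    _ ≤ K ^ 2 * (2 / δ) := by
        rw [← mul_sum]
        gcongr
        exact geom_sum_sqrt_one_sub_le hδ hδ1 n

theorem Rpseudo_le_exp_mul_influence (hG : G.IsTree) (hδ : 0 < δ) (hδ1 : δ ≤ 1) (hlam : 0 ≤ lam)
    (hgap : ∀ u ≠ r, HasGap #(children G r u) lam δ)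
    (hcard : ∀ u, #(children G r u) * lam ≤ K) (hlamK : lam ≤ K) {k : ℕ} {v : V}
    (hv : G.dist r v = k + 1) :
    Rpseudo G r lam v ≤ Real.exp (8 * K / δ) * influence (children G r) lam 0 k r v := by
  have hp₀ : ∀ u, (0 : V → ℝ) u ∈ Set.Icc 0 1 := fun _ => ⟨le_rfl, zero_le_one⟩
  refine Rpseudo_le hG hlam hv fun p p' hp hp' hpp' => ?_
  refine (abs_levelOdds_sub_le hδ.le hlam (fun _ _ _ => eq_of_mem_children hG)
    (fun _ w hw => hgap w (ne_root_of_mem_children hw)) hcard hlamK hp hp' hp₀ hpp' k r).trans ?_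
  have hnonneg := influence_nonneg (ch := children G r) (v := v) hlam hp₀ k r
  have hK : 0 ≤ K := hlam.trans hlamK
  have hexponent : 4 * K * ∑ j ∈ range k, √(1 - δ) ^ j ≤ 8 * K / δ := calc
    _ ≤ 4 * K * (2 / δ) := by gcongr; exact geom_sum_sqrt_one_sub_le hδ hδ1 k
    _ = 8 * K / δ := by ring
  exact mul_le_mul_of_nonneg_right (Real.exp_le_exp.2 hexponent) hnonneg

theorem sum_Rpseudo_le (hG : G.IsTree) (hδ : 0 < δ) (hδ1 : δ ≤ 1) (hlam : 0 < lam)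
    (hgap : ∀ u ≠ r, HasGap #(children G r u) lam δ)
    (hcard : ∀ u, #(children G r u) * lam ≤ K) (hlamK : lam ≤ K) :
    ∑ v ∈ univ.erase r, Rpseudo G r lam v ≤
      Real.exp (8 * K / δ) * (K + K ^ 2 * (2 / δ)) := by
  have hp₀ : ∀ u, (0 : V → ℝ) u ∈ Set.Icc 0 1 := fun _ => ⟨le_rfl, zero_le_one⟩
  obtain ⟨n, hn⟩ := sum_erase_root_le hG (f := Rpseudo G r lam)
    (g := fun k v => Real.exp (8 * K / δ) * influence (children G r) lam 0 k r v)
    (fun k v => mul_nonneg (Real.exp_pos _).le (influence_nonneg hlam.le hp₀ k r))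
    fun k v hv => Rpseudo_le_exp_mul_influence hG hδ hδ1 hlam.le hgap hcard hlamK hv
  refine hn.trans ?_
  simp only [← mul_sum]
  gcongr
  exact sum_range_sum_influence_le hδ hδ1 hlam
    (fun _ w hw => hgap w (ne_root_of_mem_children hw)) hcard univ n r

theorem exp_mul_add_sq_mul_le_exp (hδ : 0 < δ) (hδ1 : δ ≤ 1) (hK : 0 ≤ K) :
    Real.exp (8 * K / δ) * (K + K ^ 2 * (2 / δ)) ≤ Real.exp ((9 * K + 2 * K ^ 2) / δ) := by
  have hpoly : K + K ^ 2 * (2 / δ) ≤ (K + 2 * K ^ 2) / δ := by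
    rw [add_div, mul_div_assoc', mul_comm (K ^ 2)]
    gcongr
    exact le_div_self hK hδ hδ1
  calc Real.exp (8 * K / δ) * (K + K ^ 2 * (2 / δ))
      ≤ Real.exp (8 * K / δ) * Real.exp ((K + 2 * K ^ 2) / δ) := by
        gcongr
        linarith [Real.add_one_le_exp ((K + 2 * K ^ 2) / δ)]
    _ = Real.exp ((9 * K + 2 * K ^ 2) / δ) := by
        rw [← Real.exp_add]
        ring_nf

theorem UpToUnique.mul_le {Δ : ℕ} (h : UpToUnique Δ lam δ) (hΔ : 3 ≤ Δ) (hδ : 0 ≤ δ) (hδ1 : δ ≤ 1)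
    (hlam : 0 < lam) : Δ * lam ≤ 24 := by
  have hsucc := (h.hasGap hlam hδ1 le_rfl).succ_mul_le hδ (by omega)
  rwa [Nat.sub_add_cancel (by omega)] at hsucc

theorem sum_Rpseudo_le_of_upToUnique (hG : G.IsTree) {Δ : ℕ} (hΔ : 3 ≤ Δ) (hδ : 0 < δ)
    (hδ1 : δ ≤ 1) (hlam : 0 < lam) (huniq : UpToUnique Δ lam δ)
    (hdeg : ∀ v, (G.neighborSet v).ncard ≤ Δ) (r : V) :
    ∑ v ∈ univ.erase r, Rpseudo G r lam v ≤ Real.exp (1368 / δ) := by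
  have hΔlam : Δ * lam ≤ 24 := huniq.mul_le hΔ hδ.le hδ1 hlam
  have hgap : ∀ u ≠ r, HasGap #(children G r u) lam δ := fun u hu =>
    huniq.hasGap hlam hδ1 (card_children_le_pred hG hdeg hu)
  have hcard : ∀ u, #(children G r u) * lam ≤ 24 := fun u =>
    (mul_le_mul_of_nonneg_right (Nat.cast_le.2 (card_children_le hdeg u)) hlam.le).trans hΔlam
  have hlam24 : lam ≤ 24 :=
    (le_mul_of_one_le_left hlam.le (Nat.one_le_cast.2 (by omega))).trans hΔlam
  calc ∑ v ∈ univ.erase r, Rpseudo G r lam v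
      ≤ Real.exp (8 * 24 / δ) * (24 + 24 ^ 2 * (2 / δ)) :=
        sum_Rpseudo_le hG hδ hδ1 hlam hgap hcard hlam24
    _ ≤ Real.exp ((9 * 24 + 2 * 24 ^ 2) / δ) := exp_mul_add_sq_mul_le_exp hδ hδ1 (by norm_num)
    _ = Real.exp (1368 / δ) := by norm_num

end TotalInfluence

/-- There is a universal constant `c ≥ 1` such that for every
`Δ ≥ 3`, `δ ∈ (0,1)`, `λ > 0` up-to-`Δ` unique with gap `δ`, and every finite
tree of maximum degree at most `Δ` rooted at `r`, the total `R`-pseudoinfluence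
on the root is at most `exp (c/δ)`. -/
theorem statement12 :
    ∃ c : ℝ, 1 ≤ c ∧
      ∀ (Δ : ℕ), 3 ≤ Δ → ∀ δ : ℝ, 0 < δ → δ < 1 →
      ∀ lam : ℝ, 0 < lam → UpToUnique Δ lam δ →
      ∀ (V : Type) (_ : Fintype V), ∀ G : SimpleGraph V, G.IsTree →
      (∀ v : V, (G.neighborSet v).ncard ≤ Δ) →
      ∀ r : V,
        ∑ v ∈ Finset.univ.erase r, Rpseudo G r lam v ≤ Real.exp (c / δ) := by
  refine ⟨1368, by norm_num, fun Δ hΔ δ hδ hδ1 lam hlam huniq V _ G hG hdeg r => ?_⟩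
  exact sum_Rpseudo_le_of_upToUnique hG hΔ hδ hδ1.le hlam huniq hdeg r

end PaperStmt
end
end

section
/- Let A be a set of vertices of T with r ∉ A such that no vertex of A lies on the path from r to another vertex of A, and let μ be the hardcore distribution on independent sets of T (μ(S) proportional to λ^{|S|} over independent sets S of T). Then |Pr_μ[r ∈ S | A ⊆ S] − Pr_μ[r ∈ S | A ∩ S = ∅]| ≤ 2·∑_{v ∈ A} ℐ_r^v, where ℐ_r^v = sup_{p : L_r(ℓ(v))∖{v} → [0,1]} |Pr_{ν_p^{v,in}}[r ∈ S] − Pr_{ν_p^{v,out}}[r ∈ S]|. (Both conditioning events on the left have positive probability, since the hypothesis on A forces A to be an independent set of T.) -/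
open scoped Classical
open Finset

noncomputable section

namespace PaperStmt

variable {V : Type*} [Fintype V]

/-- Hardcore weight `λ^|S|` on independent sets of `G`. -/
def hcWeight (G : SimpleGraph V) (lam : ℝ) (S : Finset V) : ℝ :=
  if IsIndepSet G S then lam ^ S.card else 0

/-!
Summing out the state of a leaf `x` of the hardcore model only changes the activities of its
parent, so everything below the level of a vertex `v` can be eliminated. What is left is a
hardcore measure truncated at that level, with the plain activity `λ` above the level and some
activities on it; normalising the latter turns it into a mixture of `ν_p^{v,in}` and
`ν_p^{v,out}`. The marginal of the root lies between the two values for `v` in and `v` out, so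
forgetting a condition on `v` moves it by at most `ℐ_r^v`. This needs the levels above `v` to be
free of conditions, which is ensured by forgetting the conditions on `A` one vertex at a time,
starting from those closest to the root. Both conditionings of the theorem are compared in this
way with the unconditioned measure, hence the factor `2`.
-/

omit [Fintype V] in
lemma exists_adj_dist_eq_add_one {G : SimpleGraph V} (hG : G.IsTree) {r x : V} (hx : x ≠ r) :
    ∃ y, G.Adj x y ∧ G.dist r x = G.dist r y + 1 ∧
      ∀ z, G.Adj x z → z ≠ y → G.dist r z = G.dist r x + 1 := by
  obtain ⟨p, hp, hlen⟩ := hG.connected.exists_path_of_dist r x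
  have hadj : G.Adj p.penultimate x := p.adj_penultimate fun h => hx h.eq.symm
  refine ⟨p.penultimate, hadj.symm, ?_, fun z hxz hzy => ?_⟩
  · have hshort : G.dist r p.penultimate ≤ p.length - 1 := by
      simpa using SimpleGraph.dist_le p.dropLast
    have := hG.dist_eq_dist_add_one_of_adj r hadj
    omega
  · refine (hG.dist_eq_dist_add_one_of_adj r hxz).resolve_left fun hz => hzy ?_
    obtain ⟨q, hq⟩ := hG.connected.exists_walk_length_eq_dist r z
    have hqx : (q.concat hxz.symm).IsPath :=
      SimpleGraph.Walk.isPath_of_length_eq_dist _ (by rw [SimpleGraph.Walk.length_concat, hq, hz])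
    rw [(hG.existsUnique_path r x).unique hp hqx, SimpleGraph.Walk.penultimate_concat]

omit [Fintype V] in
lemma isIndepSet_of_not_dist_eq_add {G : SimpleGraph V} (hG : G.IsTree) {r : V} {A : Finset V}
    (hA : ∀ a ∈ A, ∀ b ∈ A, a ≠ b → ¬ (G.dist r b = G.dist r a + G.dist a b)) :
    IsIndepSet G A := by
  intro i hi j hj hij
  have hone := SimpleGraph.dist_eq_one_iff_adj.2 hij
  rcases hG.dist_eq_dist_add_one_of_adj r hij with h | h
  · exact hA j hj i hi hij.ne' (by rw [h, G.dist_comm (u := j), hone])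
  · exact hA i hi j hj hij.ne (by rw [h, hone])

omit [Fintype V] in
lemma isIndepSet_insert_iff {G : SimpleGraph V} {x : V} {S : Finset V} :
    IsIndepSet G (insert x S) ↔ IsIndepSet G S ∧ ∀ z ∈ S, ¬ G.Adj x z := by
  simp only [IsIndepSet, forall_mem_insert, G.irrefl, not_false_eq_true, true_and, G.adj_comm _ x]
  grind

lemma prod_eq_mul_mul_prod_compl_pair {x y : V} (hxy : x ≠ y) {f g : V → ℝ}
    (hfg : ∀ z, z ≠ x → z ≠ y → f z = g z) :
    ∏ z, f z = f x * f y * ∏ z ∈ ({x, y} : Finset V)ᶜ, g z := by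
  rw [← prod_mul_prod_compl {x, y} f, prod_pair hxy]
  congr 1
  refine prod_congr rfl fun z hz => ?_
  simp only [mem_compl, mem_insert, mem_singleton, not_or] at hz
  exact hfg z hz.1 hz.2

section Marginals

variable {w w' w₁ w₂ : Finset V → ℝ} {x : V}

lemma sum_ite_le_sum (hw : ∀ S, 0 ≤ w S) (Q : Finset V → Prop) [DecidablePred Q] :
    ∑ S, (if Q S then w S else 0) ≤ ∑ S, w S :=
  sum_le_sum fun S _ => by split_ifs <;> simp [hw]

lemma prMem_nonneg (hw : ∀ S, 0 ≤ w S) (x : V) : 0 ≤ prMem w x :=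
  div_nonneg (sum_nonneg fun S _ => ite_nonneg (hw S) le_rfl) (sum_nonneg fun S _ => hw S)

lemma prMem_le_one (hw : ∀ S, 0 ≤ w S) (x : V) : prMem w x ≤ 1 :=
  div_le_one_of_le₀ (sum_ite_le_sum hw _) (sum_nonneg fun S _ => hw S)

lemma prMem_mul_sum (hw : ∀ S, 0 ≤ w S) (x : V) :
    prMem w x * ∑ S, w S = ∑ S, if x ∈ S then w S else 0 :=
  div_mul_cancel_of_imp fun h =>
    le_antisymm ((sum_ite_le_sum hw _).trans_eq h) (sum_nonneg fun S _ => ite_nonneg (hw S) le_rfl)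

lemma prMem_const_mul {c : ℝ} (hc : c ≠ 0) (w : Finset V → ℝ) (x : V) :
    prMem (fun S => c * w S) x = prMem w x := by
  simp only [prMem, ← mul_ite_zero, ← mul_sum, mul_div_mul_left _ _ hc]

lemma prMem_mix_mem_uIcc {α β : ℝ} (hα : 0 ≤ α) (hβ : 0 ≤ β) (hw₁ : ∀ S, 0 ≤ w₁ S)
    (hw₂ : ∀ S, 0 ≤ w₂ S) (hpos : 0 < ∑ S, (α * w₁ S + β * w₂ S)) (x : V) :
    prMem (fun S => α * w₁ S + β * w₂ S) x ∈ Set.uIcc (prMem w₁ x) (prMem w₂ x) := by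
  have hmass : ∑ S, (α * w₁ S + β * w₂ S) = α * ∑ S, w₁ S + β * ∑ S, w₂ S := by
    rw [sum_add_distrib, mul_sum, mul_sum]
  have htotal := prMem_mul_sum (fun S => add_nonneg (mul_nonneg hα (hw₁ S))
    (mul_nonneg hβ (hw₂ S))) x
  have hsplit : ∑ S, (if x ∈ S then α * w₁ S + β * w₂ S else 0) =
      α * (prMem w₁ x * ∑ S, w₁ S) + β * (prMem w₂ x * ∑ S, w₂ S) := by
    rw [prMem_mul_sum hw₁, prMem_mul_sum hw₂, mul_sum, mul_sum, ← sum_add_distrib]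
    exact sum_congr rfl fun S _ => by split_ifs <;> simp
  rw [hmass] at hpos
  rw [hsplit, hmass] at htotal
  have hm₁ : 0 ≤ ∑ S, w₁ S := sum_nonneg fun S _ => hw₁ S
  have hm₂ : 0 ≤ ∑ S, w₂ S := sum_nonneg fun S _ => hw₂ S
  rw [← segment_eq_uIcc]
  refine ⟨α * (∑ S, w₁ S) / (α * ∑ S, w₁ S + β * ∑ S, w₂ S),
    β * (∑ S, w₂ S) / (α * ∑ S, w₁ S + β * ∑ S, w₂ S), by positivity, by positivity, ?_, ?_⟩
  · rw [← add_div, div_self hpos.ne']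
  · rw [eq_div_of_mul_eq hpos.ne' htotal, smul_eq_mul, smul_eq_mul]
    ring

/-- The distributions proportional to `w` and `w'` have the same marginal on the vertices outside
`D`, unnormalised, and tested against the functions of `S` that ignore the vertices of `D`. -/
def EqMarginalOff (D : Finset V) (w w' : Finset V → ℝ) : Prop :=
  ∀ F : Finset V → ℝ, (∀ x ∈ D, ∀ S, F (insert x S) = F S) →
    ∑ S, F S * w S = ∑ S, F S * w' S

namespace EqMarginalOff

variable {D : Finset V}

lemma insert (h : EqMarginalOff D w w₁)
    (hx : ∀ S, x ∉ S → w₁ S + w₁ (insert x S) = w₂ S + w₂ (insert x S)) :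
    EqMarginalOff (insert x D) w w₂ := by
  intro F hF
  rw [h F fun z hz => hF z (mem_insert_of_mem hz), ← powerset_univ, ← insert_erase (mem_univ x),
    sum_powerset_insert (notMem_erase x univ), sum_powerset_insert (notMem_erase x univ),
    ← sum_add_distrib, ← sum_add_distrib]
  refine sum_congr rfl fun S hS => ?_
  have hxS : x ∉ S := fun h => notMem_erase x univ (mem_powerset.1 hS h)
  rw [hF x (mem_insert_self x D), ← mul_add, ← mul_add, hx S hxS]

lemma ite (h : EqMarginalOff D w w') {Q : Finset V → Prop} [DecidablePred Q]
    (hQ : ∀ x ∈ D, ∀ S, Q (Insert.insert x S) ↔ Q S) :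
    EqMarginalOff D (fun S => if Q S then w S else 0) (fun S => if Q S then w' S else 0) := by
  intro F hF
  simpa only [ite_mul, mul_ite, mul_zero, zero_mul] using
    h (fun S => if Q S then F S else 0) fun x hx S => by simp only [hQ x hx S, hF x hx S]

lemma sum_eq (h : EqMarginalOff D w w') : ∑ S, w S = ∑ S, w' S := by
  simpa only [one_mul] using h (fun _ => 1) fun _ _ _ => rfl

lemma ite_mem (h : EqMarginalOff D w w') (hx : x ∉ D) (s : Prop) [Decidable s] :
    EqMarginalOff D (fun S => if x ∈ S ↔ s then w S else 0)
      (fun S => if x ∈ S ↔ s then w' S else 0) :=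
  h.ite fun z hz S => by rw [mem_insert, or_iff_right (ne_of_mem_of_not_mem hz hx).symm]

lemma prMem_eq (h : EqMarginalOff D w w') (hx : x ∉ D) : prMem w x = prMem w' x := by
  have hnum := (h.ite_mem hx True).sum_eq
  simp only [iff_true] at hnum
  rw [prMem, prMem, hnum, h.sum_eq]

lemma prMem_eq_of_const_mul {c : ℝ} (h : EqMarginalOff D w (fun S => c * w' S))
    (hw : ∑ S, w S ≠ 0) (hx : x ∉ D) : prMem w x = prMem w' x := by
  have hc : c ≠ 0 := by
    rintro rfl
    simp [h.sum_eq] at hw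
  rw [h.prMem_eq hx, prMem_const_mul hc]

end EqMarginalOff

end Marginals

/-- The hardcore weight with vertex-dependent activities: an independent set `S` gets a factor
`a x` for each `x ∈ S` and `b x` for each `x ∉ S`. Conditioning `x` out or in amounts to `a x = 0`
or `b x = 0`, and `a x = 0`, `b x = 1` deletes `x` from the graph. -/
def activityWeight (G : SimpleGraph V) (a b : V → ℝ) (S : Finset V) : ℝ :=
  if IsIndepSet G S then ∏ x, (if x ∈ S then a x else b x) else 0

section ActivityWeight

variable {G : SimpleGraph V} {a b : V → ℝ} {r v x y : V} {ℓ : ℕ} {lam : ℝ}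

lemma activityWeight_nonneg (ha : 0 ≤ a) (hb : 0 ≤ b) (S : Finset V) :
    0 ≤ activityWeight G a b S :=
  ite_nonneg (prod_nonneg fun x _ => ite_nonneg (ha x) (hb x)) le_rfl

lemma activityWeight_eq_zero_of_mem {S : Finset V} (hx : x ∈ S) (hax : a x = 0) :
    activityWeight G a b S = 0 :=
  ite_eq_right_iff.2 fun _ => prod_eq_zero (mem_univ x) (by rw [if_pos hx, hax])

lemma activityWeight_add_insert (hxy : G.Adj x y) (hleaf : ∀ z, G.Adj x z → z ≠ y → a z = 0)
    {S : Finset V} (hxS : x ∉ S) :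
    activityWeight G a b S + activityWeight G a b (insert x S) =
      activityWeight G (Function.update (Function.update a y (a y * b x)) x 0)
        (Function.update (Function.update b y (b y * (a x + b x))) x 1) S := by
  set R := ∏ z ∈ ({x, y} : Finset V)ᶜ, if z ∈ S then a z else b z with hR
  have hout : ∏ z, (if z ∈ S then a z else b z) = b x * (if y ∈ S then a y else b y) * R := by
    rw [prod_eq_mul_mul_prod_compl_pair hxy.ne fun z _ _ => rfl, if_neg hxS]
  have hin : ∏ z, (if z ∈ insert x S then a z else b z) =
      a x * (if y ∈ S then a y else b y) * R := by
    rw [prod_eq_mul_mul_prod_compl_pair hxy.ne (g := fun z => if z ∈ S then a z else b z)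
      fun z hzx _ => by simp only [mem_insert, hzx, false_or]]
    simp only [mem_insert, true_or, hxy.ne', false_or, if_true, hR]
  have hnew : ∏ z, (if z ∈ S then Function.update (Function.update a y (a y * b x)) x 0 z
      else Function.update (Function.update b y (b y * (a x + b x))) x 1 z) =
      (if y ∈ S then a y * b x else b y * (a x + b x)) * R := by
    rw [prod_eq_mul_mul_prod_compl_pair hxy.ne (g := fun z => if z ∈ S then a z else b z)
      fun z hzx hzy => by simp only [Function.update_of_ne hzx, Function.update_of_ne hzy]]
    simp only [hxS, hxy.ne', if_false, Function.update_self, ne_eq, not_false_eq_true,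
      Function.update_of_ne, one_mul, hR]
  simp only [activityWeight, isIndepSet_insert_iff, hout, hin, hnew]
  by_cases hS : IsIndepSet G S
  · by_cases hother : ∃ z ∈ S, G.Adj x z ∧ z ≠ y
    · obtain ⟨z, hzS, hxz, hzy⟩ := hother
      have hzero : R = 0 :=
        prod_eq_zero (i := z) (by simp [hxz.ne', hzy]) (by rw [if_pos hzS, hleaf z hxz hzy])
      simp only [hzero, mul_zero, ite_self, add_zero]
    · have hfree : (∀ z ∈ S, ¬ G.Adj x z) ↔ y ∉ S := by grind
      by_cases hyS : y ∈ S
      · simp only [hS, hfree, hyS, if_true, not_true, and_false, if_false]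
        ring
      · simp only [hS, hfree, hyS, if_true, not_false_eq_true, and_true, if_false]
        ring
  · simp only [hS, false_and, if_false, add_zero]

lemma exists_activities_eqMarginalOff (hG : G.IsTree) (D : Finset V)
    (hfar : ∀ x ∈ D, ℓ < G.dist r x)
    (hchild : ∀ x ∈ D, ∀ z, G.Adj x z → G.dist r z = G.dist r x + 1 → z ∈ D)
    (ha : 0 ≤ a) (hb : 0 ≤ b) :
    ∃ a' b' : V → ℝ, 0 ≤ a' ∧ 0 ≤ b' ∧ (∀ x ∈ D, a' x = 0 ∧ b' x = 1) ∧
      (∀ x, G.dist r x < ℓ → a' x = a x ∧ b' x = b x) ∧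
      EqMarginalOff D (activityWeight G a b) (activityWeight G a' b') := by
  induction D using Finset.induction_on_min_value (fun x => G.dist r x) with
  | empty => exact ⟨a, b, ha, hb, by simp, by simp, fun F _ => rfl⟩
  | insert x D hxD hmin ih =>
    obtain ⟨y, hxy, hdist, hchildren⟩ := exists_adj_dist_eq_add_one hG (r := r) (x := x) (by
      rintro rfl
      simpa using hfar x (mem_insert_self x D))
    have hyfar : ℓ ≤ G.dist r y := by
      have := hfar x (mem_insert_self x D)
      omega
    have hyD : y ∉ D := fun h => by
      have := hmin y h
      omega
    obtain ⟨a', b', ha', hb', hD, hnear, heq⟩ := ih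
      (fun z hz => hfar z (mem_insert_of_mem hz)) fun z hz u hzu hu =>
        mem_of_mem_insert_of_ne (hchild z (mem_insert_of_mem hz) u hzu hu) fun hux => by
          have := hmin z hz
          subst hux
          omega
    have hleaf (z : V) (hxz : G.Adj x z) (hzy : z ≠ y) : a' z = 0 :=
      (hD z (mem_of_mem_insert_of_ne
        (hchild x (mem_insert_self x D) z hxz (hchildren z hxz hzy)) hxz.ne')).1
    refine ⟨Function.update (Function.update a' y (a' y * b' x)) x 0,
      Function.update (Function.update b' y (b' y * (a' x + b' x))) x 1, ?_, ?_, ?_, ?_,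
      heq.insert fun S hxS => ?_⟩
    · have hy := mul_nonneg (ha' y) (hb' x)
      exact le_update_iff.2 ⟨le_rfl, fun z _ => le_update_iff (x := 0).2 ⟨hy, fun u _ => ha' u⟩ z⟩
    · have hy := mul_nonneg (hb' y) (add_nonneg (ha' x) (hb' x))
      exact le_update_iff.2
        ⟨zero_le_one, fun z _ => le_update_iff (x := 0).2 ⟨hy, fun u _ => hb' u⟩ z⟩
    · refine (forall_mem_insert ..).2 ⟨by simp only [Function.update_self, and_self], ?_⟩
      intro z hz
      have hzx : z ≠ x := ne_of_mem_of_not_mem hz hxD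
      have hzy : z ≠ y := ne_of_mem_of_not_mem hz hyD
      simpa only [Function.update_of_ne hzx, Function.update_of_ne hzy] using hD z hz
    · intro z hz
      have hzx : z ≠ x := by grind
      have hzy : z ≠ y := by grind
      simpa only [Function.update_of_ne hzx, Function.update_of_ne hzy] using hnear z hz
    · rw [activityWeight_add_insert hxy hleaf hxS, left_eq_add]
      exact activityWeight_eq_zero_of_mem (mem_insert_self x S) (Function.update_self ..)

lemma pinWeight_nonneg (hlam : 0 ≤ lam) {p : V → ℝ} (hp : ∀ u, 0 ≤ p u ∧ p u ≤ 1) (ℓ : ℕ)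
    (P S : Finset V) : 0 ≤ pinWeight G r lam ℓ P p S :=
  ite_nonneg (mul_nonneg (mul_nonneg (pow_nonneg hlam _) (prod_nonneg fun u _ => (hp u).1))
    (prod_nonneg fun u _ => sub_nonneg.2 (hp u).2)) le_rfl

lemma wIn_nonneg (hlam : 0 ≤ lam) {p : V → ℝ} (hp : ∀ u, 0 ≤ p u ∧ p u ≤ 1) (S : Finset V) :
    0 ≤ wIn G r lam v p S :=
  ite_nonneg (pinWeight_nonneg hlam hp ..) le_rfl

lemma wOut_nonneg (hlam : 0 ≤ lam) {p : V → ℝ} (hp : ∀ u, 0 ≤ p u ∧ p u ≤ 1) (S : Finset V) :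
    0 ≤ wOut G r lam v p S :=
  ite_nonneg (pinWeight_nonneg hlam hp ..) le_rfl

lemma abs_prMem_wIn_sub_wOut_le_Ipseudo (hlam : 0 ≤ lam) {p : V → ℝ}
    (hp : ∀ u, 0 ≤ p u ∧ p u ≤ 1) :
    |prMem (wIn G r lam v p) r - prMem (wOut G r lam v p) r| ≤ Ipseudo G r lam v := by
  refine le_csSup ⟨1, ?_⟩ ⟨p, hp, rfl⟩
  rintro _ ⟨q, hq, rfl⟩
  exact abs_sub_le_of_nonneg_of_le (prMem_nonneg (wIn_nonneg hlam hq) r)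
    (prMem_le_one (wIn_nonneg hlam hq) r) (prMem_nonneg (wOut_nonneg hlam hq) r)
    (prMem_le_one (wOut_nonneg hlam hq) r)

lemma pinWeight_eq_activityWeight {P : Finset V} (hP : ∀ x ∈ P, G.dist r x = ℓ) (lam : ℝ)
    (p : V → ℝ) (S : Finset V) :
    pinWeight G r lam ℓ P p S =
      activityWeight G
        (fun x => if x ∈ P then p x else if G.dist r x < ℓ then lam
          else if G.dist r x = ℓ then 1 else 0)
        (fun x => if x ∈ P then 1 - p x else 1) S := by
  by_cases hS : IsIndepSet G S ∧ ∀ v ∈ S, G.dist r v ≤ ℓ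
  · have hterm (x : V) : (if x ∈ S then if x ∈ P then p x else if G.dist r x < ℓ then lam
          else if G.dist r x = ℓ then 1 else 0 else if x ∈ P then 1 - p x else 1) =
        (if x ∈ S.filter fun v => G.dist r v < ℓ then lam else 1) *
          (if x ∈ P ∩ S then p x else 1) * (if x ∈ P \ S then 1 - p x else 1) := by
      have := hP x
      have := hS.2 x
      simp only [mem_filter, mem_inter, mem_sdiff]
      grind
    simp only [pinWeight, activityWeight, if_pos hS, if_pos hS.1, hterm, prod_mul_distrib,
      prod_ite_mem, univ_inter, prod_const]
  · rw [pinWeight, if_neg hS]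
    by_cases hI : IsIndepSet G S
    · obtain ⟨x, hxS, hx⟩ : ∃ x ∈ S, ℓ < G.dist r x := by simpa [hI] using hS
      have hxP : x ∉ P := fun h => hx.ne' (hP x h)
      exact (activityWeight_eq_zero_of_mem hxS (by simp [hxP, hx.not_gt, hx.ne'])).symm
    · rw [activityWeight, if_neg hI]

lemma activityWeight_eq_prod_mul_pinWeight {P : Finset V} (hP : ∀ x ∈ P, G.dist r x = ℓ)
    (ha : 0 ≤ a) (hb : 0 ≤ b) (hnear : ∀ x, G.dist r x < ℓ → a x = lam ∧ b x = 1)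
    (hfar : ∀ x, ℓ < G.dist r x → a x = 0 ∧ b x = 1) (S : Finset V) :
    activityWeight G a b S =
      (∏ x with G.dist r x = ℓ ∧ x ∉ P, if x ∈ S then a x else b x) * (∏ u ∈ P, (a u + b u)) *
        pinWeight G r lam ℓ P (fun u => a u / (a u + b u)) S := by
  have hpin (u : V) : a u = (a u + b u) * (a u / (a u + b u)) ∧
      b u = (a u + b u) * (1 - a u / (a u + b u)) := by
    have hau : a u = (a u + b u) * (a u / (a u + b u)) :=
      (mul_div_cancel_of_imp' fun h => ((add_eq_zero_iff_of_nonneg (ha u) (hb u)).1 h).1).symm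
    exact ⟨hau, by rw [mul_sub, ← hau]; ring⟩
  have hterm (x : V) : (if x ∈ S then a x else b x) =
      (if G.dist r x = ℓ ∧ x ∉ P then if x ∈ S then a x else b x else 1) *
        (if x ∈ P then a x + b x else 1) *
        (if x ∈ S then if x ∈ P then a x / (a x + b x) else if G.dist r x < ℓ then lam
          else if G.dist r x = ℓ then 1 else 0
        else if x ∈ P then 1 - a x / (a x + b x) else 1) := by
    have := hP x
    have := hnear x
    have := hfar x
    have := hpin x
    grind
  rw [pinWeight_eq_activityWeight hP, activityWeight, activityWeight, mul_ite_zero, prod_filter,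
    ← Fintype.prod_ite_mem P, ← prod_mul_distrib, ← prod_mul_distrib,
    prod_congr rfl fun x _ => hterm x]

lemma activityWeight_eq_mix (ha : 0 ≤ a) (hb : 0 ≤ b)
    (hnear : ∀ x, G.dist r x < G.dist r v → a x = lam ∧ b x = 1)
    (hfar : ∀ x, G.dist r v < G.dist r x → a x = 0 ∧ b x = 1) (S : Finset V) :
    activityWeight G a b S =
      a v * (∏ u ∈ (levelSet G r (G.dist r v)).erase v, (a u + b u)) *
          wIn G r lam v (fun u => a u / (a u + b u)) S +
        b v * (∏ u ∈ (levelSet G r (G.dist r v)).erase v, (a u + b u)) *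
          wOut G r lam v (fun u => a u / (a u + b u)) S := by
  have hfree : ({x | G.dist r x = G.dist r v ∧ x ∉ (levelSet G r (G.dist r v)).erase v}
      : Finset V) = {v} := by
    grind [levelSet]
  rw [activityWeight_eq_prod_mul_pinWeight (P := (levelSet G r (G.dist r v)).erase v)
    (by simp [levelSet]) ha hb hnear hfar, hfree, prod_singleton, wIn, wOut]
  by_cases hv : v ∈ S <;> simp [hv]

lemma exists_eqMarginalOff_mix (hG : G.IsTree) (v : V) (ha : 0 ≤ a) (hb : 0 ≤ b)
    (hnear : ∀ x, G.dist r x < G.dist r v → a x = lam ∧ b x = 1) :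
    ∃ p : V → ℝ, (∀ u, 0 ≤ p u ∧ p u ≤ 1) ∧ ∃ α β : ℝ, 0 ≤ α ∧ 0 ≤ β ∧
      EqMarginalOff {x | G.dist r v < G.dist r x} (activityWeight G a b)
        (fun S => α * wIn G r lam v p S + β * wOut G r lam v p S) := by
  obtain ⟨a', b', ha', hb', hfar', hnear', heq⟩ := exists_activities_eqMarginalOff hG
    {x | G.dist r v < G.dist r x} (r := r) (fun x hx => (mem_filter.1 hx).2)
    (fun x hx z _ hz => by simp only [mem_filter, mem_univ, true_and] at hx ⊢; omega) ha hb
  have hab' (u : V) : 0 ≤ a' u + b' u := add_nonneg (ha' u) (hb' u)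
  refine ⟨fun u => a' u / (a' u + b' u), fun u => ⟨div_nonneg (ha' u) (hab' u),
    div_le_one_of_le₀ (le_add_of_nonneg_right (hb' u)) (hab' u)⟩,
    a' v * ∏ u ∈ (levelSet G r (G.dist r v)).erase v, (a' u + b' u),
    b' v * ∏ u ∈ (levelSet G r (G.dist r v)).erase v, (a' u + b' u),
    mul_nonneg (ha' v) (prod_nonneg fun u _ => hab' u),
    mul_nonneg (hb' v) (prod_nonneg fun u _ => hab' u), ?_⟩
  rw [← funext (activityWeight_eq_mix ha' hb' (fun x hx => ?_) fun x hx => hfar' x (by simpa))]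
  · exact heq
  · rw [(hnear' x hx).1, (hnear' x hx).2]
    exact hnear x hx

lemma abs_prMem_ite_mem_sub_le_Ipseudo (hG : G.IsTree) (hlam : 0 ≤ lam) (v : V)
    (ha : 0 ≤ a) (hb : 0 ≤ b)
    (hnear : ∀ x, G.dist r x < G.dist r v → a x = lam ∧ b x = 1) (s : Prop) [Decidable s]
    (hpos : 0 < ∑ S, if v ∈ S ↔ s then activityWeight G a b S else 0) :
    |prMem (fun S => if v ∈ S ↔ s then activityWeight G a b S else 0) r -
      prMem (activityWeight G a b) r| ≤ Ipseudo G r lam v := by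
  obtain ⟨p, hp, α, β, hα, hβ, heq⟩ := exists_eqMarginalOff_mix (lam := lam) hG v ha hb hnear
  have hr : r ∉ ({x | G.dist r v < G.dist r x} : Finset V) := by simp
  have hv : v ∉ ({x | G.dist r v < G.dist r x} : Finset V) := by simp
  have hmix : prMem (activityWeight G a b) r ∈
      Set.uIcc (prMem (wIn G r lam v p) r) (prMem (wOut G r lam v p) r) := by
    rw [heq.prMem_eq hr]
    refine prMem_mix_mem_uIcc hα hβ (wIn_nonneg hlam hp) (wOut_nonneg hlam hp) ?_ r
    rw [← heq.sum_eq]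
    exact hpos.trans_le (sum_ite_le_sum (activityWeight_nonneg ha hb) _)
  have hcond := heq.ite_mem hv s
  refine le_trans ?_ (abs_prMem_wIn_sub_wOut_le_Ipseudo hlam hp)
  by_cases hs : s
  · have hin (S : Finset V) : (if v ∈ S ↔ s then
        α * wIn G r lam v p S + β * wOut G r lam v p S else 0) = α * wIn G r lam v p S := by
      by_cases h : v ∈ S <;> simp [hs, h, wIn, wOut]
    rw [funext hin] at hcond
    rw [hcond.prMem_eq_of_const_mul hpos.ne' hr, abs_sub_comm]
    exact (Set.abs_sub_left_of_mem_uIcc hmix).trans_eq (abs_sub_comm _ _)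
  · have hout (S : Finset V) : (if v ∈ S ↔ s then
        α * wIn G r lam v p S + β * wOut G r lam v p S else 0) = β * wOut G r lam v p S := by
      by_cases h : v ∈ S <;> simp [hs, h, wIn, wOut]
    rw [funext hout] at hcond
    rw [hcond.prMem_eq_of_const_mul hpos.ne' hr]
    exact (Set.abs_sub_right_of_mem_uIcc hmix).trans_eq (abs_sub_comm _ _)

end ActivityWeight

/-- The hardcore weight conditioned on `S` agreeing with the configuration `I` on `A`. -/
def condHcWeight (G : SimpleGraph V) (lam : ℝ) (A I S : Finset V) : ℝ :=
  if ∀ x ∈ A, (x ∈ S ↔ x ∈ I) then hcWeight G lam S else 0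

section CondHcWeight

variable {G : SimpleGraph V} {lam : ℝ} {A I S : Finset V} {v : V}

lemma condHcWeight_self : condHcWeight G lam A A S = if A ⊆ S then hcWeight G lam S else 0 := by
  simp +contextual [condHcWeight, subset_iff]

lemma condHcWeight_empty_right :
    condHcWeight G lam A ∅ S = if Disjoint A S then hcWeight G lam S else 0 := by
  simp [condHcWeight, disjoint_left]

lemma condHcWeight_empty_left : condHcWeight G lam ∅ I = hcWeight G lam := by
  ext S
  simp [condHcWeight]

lemma condHcWeight_insert :
    condHcWeight G lam (insert v A) I S =
      if v ∈ S ↔ v ∈ I then condHcWeight G lam A I S else 0 := by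
  simp only [condHcWeight, forall_mem_insert, ite_and]

lemma condHcWeight_eq_activityWeight :
    condHcWeight G lam A I =
      activityWeight G (fun x => if x ∈ A \ I then 0 else lam)
        (fun x => if x ∈ A ∩ I then 0 else 1) := by
  ext S
  by_cases hS : ∀ x ∈ A, (x ∈ S ↔ x ∈ I)
  · have hterm (x : V) : (if x ∈ S then if x ∈ A \ I then 0 else lam
        else if x ∈ A ∩ I then 0 else 1) = if x ∈ S then lam else 1 := by
      grind
    simp only [condHcWeight, hcWeight, activityWeight, if_pos hS, hterm, prod_ite_mem, univ_inter,
      prod_const]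
  · obtain ⟨x, hxA, hx⟩ : ∃ x ∈ A, ¬ (x ∈ S ↔ x ∈ I) := by simpa using hS
    have hzero : (if x ∈ S then if x ∈ A \ I then 0 else lam
        else if x ∈ A ∩ I then 0 else 1) = 0 := by
      grind
    rw [condHcWeight, if_neg hS, activityWeight, prod_eq_zero (mem_univ x) hzero, ite_self]

lemma sum_condHcWeight_pos (hlam : 0 < lam) (hI : IsIndepSet G I) (A : Finset V) :
    0 < ∑ S, condHcWeight G lam A I S := by
  refine sum_pos' (fun S _ => ite_nonneg (ite_nonneg (by positivity) le_rfl) le_rfl)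
    ⟨I, mem_univ I, ?_⟩
  simp only [condHcWeight, hcWeight, implies_true, if_true, if_pos hI]
  positivity

lemma abs_prMem_condHcWeight_sub_le_sum_Ipseudo (hG : G.IsTree) (hlam : 0 < lam) (r : V)
    (A : Finset V) (hI : IsIndepSet G I) :
    |prMem (condHcWeight G lam A I) r - prMem (hcWeight G lam) r| ≤
      ∑ v ∈ A, Ipseudo G r lam v := by
  induction A using Finset.induction_on_min_value (fun x => G.dist r x) with
  | empty => simp [condHcWeight_empty_left]
  | insert v B hvB hmin ih =>
    set a : V → ℝ := fun x => if x ∈ B \ I then 0 else lam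
    set b : V → ℝ := fun x => if x ∈ B ∩ I then 0 else 1
    have hB : condHcWeight G lam B I = activityWeight G a b := condHcWeight_eq_activityWeight
    have hinsert : condHcWeight G lam (insert v B) I =
        fun S => if v ∈ S ↔ v ∈ I then activityWeight G a b S else 0 := by
      rw [← hB]
      exact funext fun S => condHcWeight_insert
    have hfree (x : V) (hx : G.dist r x < G.dist r v) : a x = lam ∧ b x = 1 := by
      have hxB : x ∉ B := fun h => hx.not_ge (hmin x h)
      simp [a, b, hxB]
    have hpos := sum_condHcWeight_pos hlam hI (insert v B)
    rw [hinsert] at hpos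
    rw [sum_insert hvB]
    refine (abs_sub_le _ _ _).trans (add_le_add ?_ ih)
    rw [hinsert, hB]
    exact abs_prMem_ite_mem_sub_le_Ipseudo hG hlam.le v (fun x => ite_nonneg le_rfl hlam.le)
      (fun x => ite_nonneg le_rfl zero_le_one) hfree (v ∈ I) hpos

end CondHcWeight

theorem statement13_general {G : SimpleGraph V} (hG : G.IsTree) {lam : ℝ} (hlam : 0 < lam) (r : V)
    (A : Finset V) {I J : Finset V} (hI : IsIndepSet G I) (hJ : IsIndepSet G J) :
    |prMem (condHcWeight G lam A I) r - prMem (condHcWeight G lam A J) r| ≤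
      2 * ∑ v ∈ A, Ipseudo G r lam v := by
  calc
    _ ≤ |prMem (condHcWeight G lam A I) r - prMem (hcWeight G lam) r| +
        |prMem (hcWeight G lam) r - prMem (condHcWeight G lam A J) r| := abs_sub_le _ _ _
    _ ≤ ∑ v ∈ A, Ipseudo G r lam v + ∑ v ∈ A, Ipseudo G r lam v := by
      rw [abs_sub_comm (prMem (hcWeight G lam) r)]
      gcongr
      · exact abs_prMem_condHcWeight_sub_le_sum_Ipseudo hG hlam r A hI
      · exact abs_prMem_condHcWeight_sub_le_sum_Ipseudo hG hlam r A hJ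
    _ = 2 * ∑ v ∈ A, Ipseudo G r lam v := (two_mul _).symm

/-- **decoupling.** If no vertex of `A` lies on the path from the
root `r` to another vertex of `A` (and `r ∉ A`), then the influence of pinning
all of `A` in versus all of `A` out on the marginal of `r` is at most twice the
sum of the single-vertex pseudoinfluences `ℐ_r^v`, `v ∈ A`. -/
theorem statement13 (V : Type) [Fintype V] (G : SimpleGraph V) (hG : G.IsTree)
    (lam : ℝ) (hlam : 0 < lam) (r : V) (A : Finset V) (hrA : r ∉ A)
    (hpath : ∀ a ∈ A, ∀ b ∈ A, a ≠ b →
      ¬ (G.dist r b = G.dist r a + G.dist a b)) :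
    |prMem (fun S => if A ⊆ S then hcWeight G lam S else 0) r
        - prMem (fun S => if Disjoint A S then hcWeight G lam S else 0) r|
      ≤ 2 * ∑ v ∈ A, Ipseudo G r lam v := by
  simpa only [← condHcWeight_self, ← condHcWeight_empty_right] using statement13_general hG hlam r A
    (isIndepSet_of_not_dist_eq_add hG hpath) (by simp [IsIndepSet] : IsIndepSet G ∅)

end PaperStmt
end
end
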